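/- arXiv:2008.09855 — 3 statements merged into one kernel-verified Lean document; each statement's English description precedes it below -/
import Mathlib

section
/- There exists a constant ε₀ = ε₀(n, λ, V₀) > 0 such that if the smallness condition holds with parameter ε₀ and d > 0, then every ancient solution u of ∂ₜu = Lu on ℝ⁻ × Ω vanishing on ℝ⁻ × ∂Ω for which there exists C > 0 with |u(t,x)| ≤ C(|x| + |t|^{1/2} + 1)^d for all (t,x) ∈ ℝ⁻ × Ω is identically zero; that is, the space P_d of polynomial-growth ancient solutions is {0}. -/
/-!
The coefficient `c` may be enlarged by a small `θ > 0`: if `u` is an ancient solution, then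
`U = exp (θ t) u` is one for `c + θ` (`IsAncientSolution.shift`), and since `t ≤ 0` the new factor
absorbs the polynomial growth in time. As the cross section is bounded, `|U| ≤ C_k exp (k |x₀|)` for
every `k > 0`, uniformly in time (`shifted_growth`). It remains to show that such a `U` is
nonpositive (`core`); applied to `U` and `-U`, this gives `u = 0`.

Fix the weight `w = exp (-κ √(1 + x₀²))` with `κ` small and the truncation `z = (w U - δ)₊`,
`δ > 0`. It is bounded by an integrable function independent of time, and its support at each time
is a compact subset of the strip. Testing the equation with `4 z³ w` gives
`(∫ z⁴)' ≤ -2λ ∫ |∇(z²)|² + A ∫ z⁴ + B δ² ∫ z²` (`energy_pointwise`, `energy_slice`), where `A` is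
small with `ε₀` and `κ`. The Poincaré inequality in the strip (`poincare_two`), whose constant
depends only on `n` and `V₀`, absorbs the second term, so that `∫ z⁴` satisfies `E' ≤ -γ E + O(δ²)`
on all of `(-∞, 0]` while being bounded there. Grönwall's inequality started at `-∞`
(`ancient_gronwall`) yields `∫ z⁴ = O(δ²)`, and `δ → 0` gives `U ≤ 0`. The threshold `ε₀` only has
to beat the Poincaré constant; `Λ` enters only through the choice of `κ`.

Solutions are classical, with a time derivative at each point but no local bound on it. The
differentiation of `∫ z⁴` under the integral (`energy_hasDeriv`) therefore rests on a Lipschitz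
bound forward in time, locally uniform in space, obtained by comparing `u` with a quadratic barrier
over the fixed slice `u t` (`forward_upper`). The fourth power makes all truncated quantities `C¹`.
-/

open MeasureTheory Set Filter

noncomputable section

/-- Partial derivative of `f` in the `i`-th coordinate direction. -/
def pd {n : ℕ} (i : Fin (n + 1)) (f : (Fin (n + 1) → ℝ) → ℝ) (x : Fin (n + 1) → ℝ) : ℝ :=
  fderiv ℝ f x (Pi.single i 1)

/-- The divergence-form operator `L u = ∂ᵢ(aᶦʲ ∂ⱼ u) + bⁱ ∂ᵢ u + c u`. -/
def Lop {n : ℕ} (a : (Fin (n + 1) → ℝ) → Fin (n + 1) → Fin (n + 1) → ℝ)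
    (b : (Fin (n + 1) → ℝ) → Fin (n + 1) → ℝ) (c : (Fin (n + 1) → ℝ) → ℝ)
    (f : (Fin (n + 1) → ℝ) → ℝ) (x : Fin (n + 1) → ℝ) : ℝ :=
  (∑ i, pd i (fun y => ∑ j, a y i j * pd j f y) x) + (∑ i, b x i * pd i f x) + c x * f x

/-- The infinite strip `Ω = ℝ × Ω₀ ⊆ ℝ^{n+1}` (first coordinate `x₀` unconstrained). -/
def strip {n : ℕ} (Ω₀ : Set (Fin n → ℝ)) : Set (Fin (n + 1) → ℝ) :=
  {x | (fun i : Fin n => x i.succ) ∈ Ω₀}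

/-- `D_r = (-r, r) × Ω₀`. -/
def Dset {n : ℕ} (Ω₀ : Set (Fin n → ℝ)) (r : ℝ) : Set (Fin (n + 1) → ℝ) :=
  {x | x 0 ∈ Ioo (-r) r ∧ (fun i : Fin n => x i.succ) ∈ Ω₀}

/-- `Q_r = (-r², 0] × D_r`. -/
def Qset {n : ℕ} (Ω₀ : Set (Fin n → ℝ)) (r : ℝ) : Set (ℝ × (Fin (n + 1) → ℝ)) :=
  Ioc (-r ^ 2) 0 ×ˢ Dset Ω₀ r

/-- Ellipticity, boundedness and regularity of the coefficients of `L`. -/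
structure GoodCoeffs {n : ℕ} (Ω₀ : Set (Fin n → ℝ)) (lam Lam : ℝ)
    (a : (Fin (n + 1) → ℝ) → Fin (n + 1) → Fin (n + 1) → ℝ)
    (b : (Fin (n + 1) → ℝ) → Fin (n + 1) → ℝ) (c : (Fin (n + 1) → ℝ) → ℝ) : Prop where
  elliptic : ∀ x ∈ strip Ω₀, ∀ ξ : Fin (n + 1) → ℝ,
    lam * ∑ i, ξ i ^ 2 ≤ ∑ i, ∑ j, a x i j * ξ i * ξ j
  a_bdd : ∀ x ∈ strip Ω₀, ∀ i j, |a x i j| ≤ Lam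
  a_reg : ∀ i j, ContDiffOn ℝ 1 (fun x => a x i j) (strip Ω₀)
  b_bdd : ∃ M, ∀ x ∈ strip Ω₀, ∀ i, |b x i| ≤ M
  c_bdd : ∃ M, ∀ x ∈ strip Ω₀, |c x| ≤ M

/-- The smallness condition with parameter `ε`: `|bⁱ| ≤ √ε` and `c ≤ ε` on `Ω`. -/
def Smallness {n : ℕ} (Ω₀ : Set (Fin n → ℝ))
    (b : (Fin (n + 1) → ℝ) → Fin (n + 1) → ℝ) (c : (Fin (n + 1) → ℝ) → ℝ) (ε : ℝ) : Prop :=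
  ∀ x ∈ strip Ω₀, (∀ i, |b x i| ≤ Real.sqrt ε) ∧ c x ≤ ε

/-- Ancient solution of `∂ₜ u = L u` on `ℝ⁻ × Ω` vanishing on `ℝ⁻ × ∂Ω`:
continuous up to the boundary, `C²` in space, differentiable in time, solving the equation. -/
structure IsAncientSolution {n : ℕ} (Ω₀ : Set (Fin n → ℝ))
    (a : (Fin (n + 1) → ℝ) → Fin (n + 1) → Fin (n + 1) → ℝ)
    (b : (Fin (n + 1) → ℝ) → Fin (n + 1) → ℝ) (c : (Fin (n + 1) → ℝ) → ℝ)
    (u : ℝ → (Fin (n + 1) → ℝ) → ℝ) : Prop where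
  cont : ContinuousOn (fun p : ℝ × (Fin (n + 1) → ℝ) => u p.1 p.2)
    (Iic (0 : ℝ) ×ˢ closure (strip Ω₀))
  space_reg : ∀ t ≤ (0 : ℝ), ContDiffOn ℝ 2 (u t) (strip Ω₀)
  pde : ∀ t ≤ (0 : ℝ), ∀ x ∈ strip Ω₀,
    HasDerivWithinAt (fun s => u s x) (Lop a b c (u t) x) (Iic (0 : ℝ)) t
  bdry : ∀ t ≤ (0 : ℝ), ∀ x ∈ frontier (strip Ω₀), u t x = 0

/-- Membership in `E_d`: an ancient solution with exponential growth of order `d`. -/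
def MemEd {n : ℕ} (Ω₀ : Set (Fin n → ℝ))
    (a : (Fin (n + 1) → ℝ) → Fin (n + 1) → Fin (n + 1) → ℝ)
    (b : (Fin (n + 1) → ℝ) → Fin (n + 1) → ℝ) (c : (Fin (n + 1) → ℝ) → ℝ)
    (d : ℝ) (u : ℝ → (Fin (n + 1) → ℝ) → ℝ) : Prop :=
  IsAncientSolution Ω₀ a b c u ∧
  ∃ C > (0 : ℝ), ∀ t ≤ (0 : ℝ), ∀ x ∈ strip Ω₀,
    |u t x| ≤ C * Real.exp (d * (Real.sqrt (∑ i, x i ^ 2) + Real.sqrt |t|))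

/-! ### Poincaré inequality with a constant depending on the cross-sectional volume -/

/-- Poincaré inequality in `L¹` for nonnegative functions supported in the strip, with a constant
depending only on the cross-sectional volume. Every point is compared with its translates by the
vectors `(0, k)`, `k ∈ [0, R]ⁿ`. As the cube has volume `2V` and the cross section at most `V`, at
least half of these translates leave the strip, where the function vanishes. -/
lemma poincare_one {n : ℕ} {Ω₀ : Set (Fin n → ℝ)} (hΩm : MeasurableSet Ω₀) {V R : ℝ}
    (hV : 0 < V) (hvol : volume Ω₀ ≤ ENNReal.ofReal V) (hR : 0 ≤ R) (hRn : R ^ n = 2 * V)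
    (F : (Fin (n + 1) → ℝ) → ℝ) (hF : ContDiff ℝ 1 F) (hc : HasCompactSupport F)
    (h0 : ∀ x, 0 ≤ F x) (hs : ∀ x ∉ strip Ω₀, F x = 0) :
    ∫ x, F x ≤ 2 * R * ∫ x, ‖fderiv ℝ F x‖ := by
  have hFc : Continuous F := hF.continuous
  have hDc : Continuous (fun x => fderiv ℝ F x) := hF.continuous_fderiv (by norm_num)
  have hDs : HasCompactSupport (fun x => fderiv ℝ F x) := hc.fderiv ℝ
  have hFi : Integrable F := hFc.integrable_of_hasCompactSupport hc
  have hDi : Integrable (fun x => ‖fderiv ℝ F x‖) :=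
    (hDc.integrable_of_hasCompactSupport hDs).norm
  set Fe : (Fin (n + 1) → ℝ) → ENNReal := fun x => ENNReal.ofReal (F x) with hFe
  set De : (Fin (n + 1) → ℝ) → ENNReal := fun x => ENNReal.ofReal ‖fderiv ℝ F x‖ with hDe
  have hFem : Measurable Fe := (ENNReal.continuous_ofReal.comp hFc).measurable
  have hDem : Measurable De := (ENNReal.continuous_ofReal.comp hDc.norm).measurable
  set h : (Fin n → ℝ) → (Fin (n + 1) → ℝ) := fun k => Fin.cons 0 k with hh
  have hhc : Continuous h := by
    refine continuous_pi fun i => ?_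
    refine Fin.cases ?_ (fun j => ?_) i
    · simp [hh, continuous_const]
    · simpa [hh] using continuous_apply j
  have hSm : MeasurableSet (strip Ω₀) := by
    have : Measurable (fun x : Fin (n + 1) → ℝ => fun i : Fin n => x i.succ) := by fun_prop
    exact this hΩm
  -- the cube of translations, of volume `2V`
  set Q : Set (Fin n → ℝ) := Icc 0 (fun _ => R) with hQ
  have hQv : volume Q = ENNReal.ofReal (2 * V) := by
    rw [hQ, Real.volume_Icc_pi]
    simp [← ENNReal.ofReal_pow hR, hRn]
  have hhn : ∀ k ∈ Q, ‖h k‖ ≤ R := by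
    intro k hk
    refine (pi_norm_le_iff_of_nonneg hR).2 fun i => ?_
    refine Fin.cases ?_ (fun j => ?_) i
    · simpa [hh] using hR
    · simp only [hh, Fin.cons_succ, Real.norm_eq_abs]
      rw [abs_of_nonneg (hk.1 j)]
      exact hk.2 j
  -- the fundamental theorem of calculus along the segment from `x` to `x + h k`
  have key : ∀ k ∈ Q, ∀ x, Fe x ≤ Fe (x + h k) +
      ENNReal.ofReal R * ∫⁻ s in Ioc (0:ℝ) 1, De (x + s • h k) := by
    intro k hk x
    have hd : ∀ s ∈ uIcc (0:ℝ) 1, HasDerivAt (fun s : ℝ => F (x + s • h k))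
        (fderiv ℝ F (x + s • h k) (h k)) s := by
      intro s _
      have h1 : HasDerivAt (fun s : ℝ => x + s • h k) (h k) s := by
        simpa using ((hasDerivAt_id s).smul_const (h k)).const_add x
      exact ((hF.differentiable (by norm_num)) _).hasFDerivAt.comp_hasDerivAt s h1
    have hcs : Continuous (fun s : ℝ => x + s • h k) := by fun_prop
    have hci : Continuous (fun s : ℝ => fderiv ℝ F (x + s • h k) (h k)) :=
      (hDc.comp hcs).clm_apply continuous_const
    have hcn : Continuous (fun s : ℝ => ‖fderiv ℝ F (x + s • h k)‖) := (hDc.comp hcs).norm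
    have e1 := intervalIntegral.integral_eq_sub_of_hasDerivAt hd (hci.intervalIntegrable 0 1)
    have e2 : -(∫ s in (0:ℝ)..1, fderiv ℝ F (x + s • h k) (h k)) ≤
        R * ∫ s in (0:ℝ)..1, ‖fderiv ℝ F (x + s • h k)‖ := by
      rw [← intervalIntegral.integral_neg, ← intervalIntegral.integral_const_mul]
      refine intervalIntegral.integral_mono_on zero_le_one (hci.neg.intervalIntegrable _ _)
        ((continuous_const.mul hcn).intervalIntegrable _ _) fun s _ => ?_
      refine (neg_le_abs _).trans ?_
      rw [mul_comm]
      exact ((fderiv ℝ F (x + s • h k)).le_opNorm _).trans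
        (mul_le_mul_of_nonneg_left (hhn k hk) (norm_nonneg _))
    have e3 : F x ≤ F (x + h k) + R * ∫ s in (0:ℝ)..1, ‖fderiv ℝ F (x + s • h k)‖ := by
      simp only [zero_smul, add_zero, one_smul] at e1
      linarith
    have hpos : 0 ≤ ∫ s in (0:ℝ)..1, ‖fderiv ℝ F (x + s • h k)‖ :=
      intervalIntegral.integral_nonneg zero_le_one fun _ _ => norm_nonneg _
    calc Fe x ≤ ENNReal.ofReal
          (F (x + h k) + R * ∫ s in (0:ℝ)..1, ‖fderiv ℝ F (x + s • h k)‖) :=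
          ENNReal.ofReal_le_ofReal e3
      _ = _ := by
        rw [ENNReal.ofReal_add (h0 _) (mul_nonneg hR hpos), ENNReal.ofReal_mul hR,
          intervalIntegral.integral_of_le zero_le_one,
          ofReal_integral_eq_lintegral_ofReal
            ((hcn.intervalIntegrable 0 1).1) (ae_of_all _ fun _ => norm_nonneg _)]
  set I := ∫⁻ x, Fe x with hI
  set D := ∫⁻ x, De x with hD
  have hIs : ∫⁻ x in strip Ω₀, Fe x = I := by
    rw [← lintegral_indicator hSm]
    refine lintegral_congr fun x => ?_
    by_cases hx : x ∈ strip Ω₀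
    · simp [hx]
    · simp [hx, hFe, hs x hx]
  have key2 : ∀ k ∈ Q, I ≤ (∫⁻ x in strip Ω₀, Fe (x + h k)) + ENNReal.ofReal R * D := by
    intro k hk
    have hm1 : Measurable fun x => Fe (x + h k) := hFem.comp (measurable_id.add_const _)
    have hm2 : Measurable (Function.uncurry fun (x : Fin (n + 1) → ℝ) (s : ℝ) =>
        De (x + s • h k)) := by
      refine hDem.comp ?_
      have : Continuous fun p : (Fin (n + 1) → ℝ) × ℝ => p.1 + p.2 • h k := by fun_prop
      exact this.measurable
    have hm3 : Measurable fun x => ∫⁻ s in Ioc (0:ℝ) 1, De (x + s • h k) :=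
      Measurable.lintegral_prod_right hm2
    calc I = ∫⁻ x in strip Ω₀, Fe x := hIs.symm
      _ ≤ ∫⁻ x in strip Ω₀, (Fe (x + h k) +
          ENNReal.ofReal R * ∫⁻ s in Ioc (0:ℝ) 1, De (x + s • h k)) :=
        lintegral_mono fun x => key k hk x
      _ = (∫⁻ x in strip Ω₀, Fe (x + h k)) + ENNReal.ofReal R *
          ∫⁻ x in strip Ω₀, ∫⁻ s in Ioc (0:ℝ) 1, De (x + s • h k) := by
        rw [lintegral_add_left hm1, lintegral_const_mul _ hm3]
      _ ≤ (∫⁻ x in strip Ω₀, Fe (x + h k)) + ENNReal.ofReal R *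
          ∫⁻ x, ∫⁻ s in Ioc (0:ℝ) 1, De (x + s • h k) := by
        gcongr
        exact Measure.restrict_le_self
      _ = _ := by
        congr 2
        rw [lintegral_lintegral_swap hm2.aemeasurable]
        simp_rw [lintegral_add_right_eq_self (μ := (volume : Measure (Fin (n+1) → ℝ))) De]
        simp [hD]
  -- by Fubini, the translates that stay in the strip contribute at most the factor `V`
  have hswap : ∫⁻ k in Q, ∫⁻ x in strip Ω₀, Fe (x + h k) ≤ ENNReal.ofReal V * I := by
    have e1 : ∀ k, ∫⁻ x in strip Ω₀, Fe (x + h k) =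
        ∫⁻ y, (strip Ω₀).indicator 1 (y - h k) * Fe y := by
      intro k
      rw [← lintegral_indicator hSm]
      rw [← lintegral_add_right_eq_self (fun y => (strip Ω₀).indicator 1 (y - h k) * Fe y) (h k)]
      refine lintegral_congr fun x => ?_
      by_cases hx : x ∈ strip Ω₀ <;> simp [hx]
    have hm : Measurable (Function.uncurry fun (k : Fin n → ℝ) (y : Fin (n + 1) → ℝ) =>
        (strip Ω₀).indicator (1 : (Fin (n + 1) → ℝ) → ENNReal) (y - h k) * Fe y) := by
      refine Measurable.mul ?_ (hFem.comp measurable_snd)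
      refine (measurable_one.indicator hSm).comp ?_
      exact (measurable_snd.sub (hhc.measurable.comp measurable_fst))
    simp_rw [e1]
    calc _ ≤ ∫⁻ k, ∫⁻ y, (strip Ω₀).indicator 1 (y - h k) * Fe y :=
          lintegral_mono' Measure.restrict_le_self le_rfl
      _ = ∫⁻ y, ∫⁻ k, (strip Ω₀).indicator 1 (y - h k) * Fe y :=
          lintegral_lintegral_swap hm.aemeasurable
      _ ≤ ∫⁻ y, ENNReal.ofReal V * Fe y := by
        refine lintegral_mono fun y => ?_
        have hmm : Measurable fun k => (strip Ω₀).indicator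
            (1 : (Fin (n + 1) → ℝ) → ENNReal) (y - h k) :=
          (measurable_one.indicator hSm).comp (measurable_const.sub hhc.measurable)
        show ∫⁻ k, (strip Ω₀).indicator 1 (y - h k) * Fe y ≤ ENNReal.ofReal V * Fe y
        rw [lintegral_mul_const _ hmm]
        gcongr
        have : ∀ k, (strip Ω₀).indicator (1 : (Fin (n + 1) → ℝ) → ENNReal) (y - h k) =
            Ω₀.indicator 1 ((fun i : Fin n => y i.succ) - k) := by
          intro k
          have : (y - h k ∈ strip Ω₀) ↔ ((fun i : Fin n => y i.succ) - k ∈ Ω₀) := by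
            have e : (fun i : Fin n => (y - h k) i.succ) = (fun i : Fin n => y i.succ) - k := by
              ext i; simp [hh]
            simp only [strip, mem_ofPred_eq, e]
          by_cases hk : y - h k ∈ strip Ω₀
          · rw [indicator_of_mem hk, indicator_of_mem (this.1 hk)]; rfl
          · rw [indicator_of_notMem hk, indicator_of_notMem fun h' => hk (this.2 h')]
        simp_rw [this]
        rw [lintegral_sub_left_eq_self (Ω₀.indicator 1), lintegral_indicator_one hΩm]
        exact hvol
      _ = _ := lintegral_const_mul _ hFem
  have hIfin : I ≠ ⊤ := hFi.lintegral_lt_top.ne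
  have hDfin : D ≠ ⊤ := hDi.lintegral_lt_top.ne
  have key3 : ENNReal.ofReal (2 * V) * I ≤
      ENNReal.ofReal V * I + ENNReal.ofReal (2 * V) * (ENNReal.ofReal R * D) := by
    calc ENNReal.ofReal (2 * V) * I = ∫⁻ k in Q, I := by
          rw [setLIntegral_const, hQv, mul_comm]
      _ ≤ ∫⁻ k in Q, ((∫⁻ x in strip Ω₀, Fe (x + h k)) + ENNReal.ofReal R * D) :=
          setLIntegral_mono' measurableSet_Icc key2
      _ = (∫⁻ k in Q, ∫⁻ x in strip Ω₀, Fe (x + h k)) +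
            ENNReal.ofReal (2 * V) * (ENNReal.ofReal R * D) := by
          rw [lintegral_add_right _ measurable_const, setLIntegral_const, hQv,
            mul_comm (ENNReal.ofReal (2 * V))]
      _ ≤ _ := by gcongr
  have r1 : ∫ x, F x = I.toReal := integral_eq_lintegral_of_nonneg_ae
    (ae_of_all _ h0) hFc.aestronglyMeasurable
  have r2 : ∫ x, ‖fderiv ℝ F x‖ = D.toReal := integral_eq_lintegral_of_nonneg_ae
    (ae_of_all _ fun _ => norm_nonneg _) hDi.aestronglyMeasurable
  rw [r1, r2]
  have k4 := ENNReal.toReal_mono (by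
    refine ENNReal.add_ne_top.2 ⟨ENNReal.mul_ne_top ENNReal.ofReal_ne_top hIfin,
      ENNReal.mul_ne_top ENNReal.ofReal_ne_top (ENNReal.mul_ne_top ENNReal.ofReal_ne_top hDfin)⟩)
    key3
  rw [ENNReal.toReal_add (ENNReal.mul_ne_top ENNReal.ofReal_ne_top hIfin)
    (ENNReal.mul_ne_top ENNReal.ofReal_ne_top (ENNReal.mul_ne_top ENNReal.ofReal_ne_top hDfin))]
    at k4
  simp only [ENNReal.toReal_mul] at k4
  rw [ENNReal.toReal_ofReal (by positivity), ENNReal.toReal_ofReal hV.le,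
    ENNReal.toReal_ofReal hR] at k4
  have : V * I.toReal ≤ V * (2 * R * D.toReal) := by nlinarith
  exact le_of_mul_le_mul_left this hV

lemma norm_fderiv_le_sum_pd {n : ℕ} (f : (Fin (n + 1) → ℝ) → ℝ) (x : Fin (n + 1) → ℝ) :
    ‖fderiv ℝ f x‖ ≤ ∑ i, |pd i f x| := by
  refine ContinuousLinearMap.opNorm_le_bound _ (Finset.sum_nonneg fun _ _ => abs_nonneg _)
    fun v => ?_
  have hv : v = ∑ i, v i • (Pi.single i (1:ℝ) : Fin (n + 1) → ℝ) := by
    ext j; simp [Finset.sum_apply, Pi.single_apply]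
  conv_lhs => rw [hv]
  rw [map_sum, Finset.sum_mul]
  refine (norm_sum_le _ _).trans (Finset.sum_le_sum fun i _ => ?_)
  rw [map_smul, norm_smul, mul_comm]
  exact mul_le_mul_of_nonneg_left (norm_le_pi_norm v i) (abs_nonneg _)

lemma continuous_pd {n : ℕ} {f : (Fin (n + 1) → ℝ) → ℝ} (hf : ContDiff ℝ 1 f)
    (i : Fin (n + 1)) : Continuous (pd i f) :=
  (hf.continuous_fderiv (by norm_num)).clm_apply continuous_const

lemma hasCompactSupport_pd {n : ℕ} {f : (Fin (n + 1) → ℝ) → ℝ} (hf : HasCompactSupport f)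
    (i : Fin (n + 1)) : HasCompactSupport (pd i f) :=
  (hf.fderiv ℝ).comp_left (g := fun L : (Fin (n + 1) → ℝ) →L[ℝ] ℝ => L (Pi.single i 1)) rfl

lemma integrable_pd_sq {n : ℕ} {f : (Fin (n + 1) → ℝ) → ℝ} (hf : ContDiff ℝ 1 f)
    (hc : HasCompactSupport f) : Integrable fun x => ∑ i, pd i f x ^ 2 := by
  refine integrable_finsetSum _ fun i _ => ?_
  have h1 : Continuous fun x => pd i f x ^ 2 := (continuous_pd hf i).pow 2
  have h2 : HasCompactSupport fun x => pd i f x ^ 2 := by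
    refine (hasCompactSupport_pd hc i).mono fun x hx => ?_
    simpa using hx
  exact h1.integrable_of_hasCompactSupport h2

/-- Poincaré inequality in `L²`: the `L¹` inequality applied to `Y²`. -/
lemma poincare_two {n : ℕ} {Ω₀ : Set (Fin n → ℝ)} (hΩm : MeasurableSet Ω₀) {V R : ℝ}
    (hV : 0 < V) (hvol : volume Ω₀ ≤ ENNReal.ofReal V) (hR : 0 ≤ R) (hRn : R ^ n = 2 * V)
    (Y : (Fin (n + 1) → ℝ) → ℝ) (hY : ContDiff ℝ 1 Y) (hc : HasCompactSupport Y)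
    (hs : ∀ x ∉ strip Ω₀, Y x = 0) :
    ∫ x, Y x ^ 2 ≤ 16 * R ^ 2 * (n + 1) * ∫ x, ∑ i, pd i Y x ^ 2 := by
  have hY2 : HasCompactSupport fun x => Y x ^ 2 :=
    hc.comp_left (g := fun r : ℝ => r ^ 2) (by norm_num)
  have h1 := poincare_one hΩm hV hvol hR hRn (fun x => Y x ^ 2) (hY.pow 2) hY2
    (fun x => sq_nonneg _) (fun x hx => by simp [hs x hx])
  have hi1 : Integrable fun x => Y x ^ 2 :=
    (hY.continuous.pow 2).integrable_of_hasCompactSupport hY2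
  have hi2 := integrable_pd_sq hY hc
  have hpt : ∀ x, 2 * R * ‖fderiv ℝ (fun x => Y x ^ 2) x‖ ≤
      1 / 2 * Y x ^ 2 + 8 * R ^ 2 * (n + 1) * ∑ i, pd i Y x ^ 2 := by
    intro x
    have hd : HasFDerivAt (fun x => Y x ^ 2) ((2 * Y x) • fderiv ℝ Y x) x := by
      have := ((hY.differentiable (by norm_num)) x).hasFDerivAt.pow 2
      simpa using this
    rw [hd.fderiv, norm_smul]
    have hS := norm_fderiv_le_sum_pd Y x
    have hS2 : (∑ i, |pd i Y x|) ^ 2 ≤ (n + 1) * ∑ i, pd i Y x ^ 2 := by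
      have := sq_sum_le_card_mul_sum_sq (s := Finset.univ) (f := fun i => |pd i Y x|)
      simpa using this
    have hS3 : ‖fderiv ℝ Y x‖ ^ 2 ≤ (n + 1) * ∑ i, pd i Y x ^ 2 :=
      (pow_le_pow_left₀ (norm_nonneg _) hS 2).trans hS2
    have habs : ‖2 * Y x‖ = 2 * |Y x| := by simp
    rw [habs]
    have hR2 : 0 ≤ R ^ 2 := sq_nonneg R
    nlinarith [sq_nonneg (|Y x| - 4 * R * ‖fderiv ℝ Y x‖), sq_abs (Y x),
      mul_le_mul_of_nonneg_left hS3 hR2]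
  have h2 : ∫ x, 2 * R * ‖fderiv ℝ (fun x => Y x ^ 2) x‖ ≤
      ∫ x, (1 / 2 * Y x ^ 2 + 8 * R ^ 2 * (n + 1) * ∑ i, pd i Y x ^ 2) := by
    refine integral_mono ?_ ((hi1.const_mul _).add (hi2.const_mul _)) hpt
    exact ((((hY.pow 2).continuous_fderiv (by norm_num)).integrable_of_hasCompactSupport
      (hY2.fderiv ℝ)).norm).const_mul _
  rw [integral_add (hi1.const_mul _) (hi2.const_mul _), integral_const_mul, integral_const_mul,
    integral_const_mul] at h2
  linarith

/-! ### Second-order conditions at a touching point -/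

open scoped MatrixOrder Matrix.Norms.L2Operator in
/-- Only the quadratic form of `A` is assumed nonnegative, `A` need not be symmetric. The proof
factors `-H = Bᵀ B`. -/
lemma trace_mul_nonpos {m : ℕ} (A H : Fin m → Fin m → ℝ)
    (hA : ∀ ξ : Fin m → ℝ, 0 ≤ ∑ i, ∑ j, A i j * ξ i * ξ j)
    (hs : ∀ i j, H i j = H j i) (hH : ∀ ξ : Fin m → ℝ, ∑ i, ∑ j, H i j * ξ i * ξ j ≤ 0) :
    ∑ i, ∑ j, A i j * H i j ≤ 0 := by
  set M : Matrix (Fin m) (Fin m) ℝ := Matrix.of fun i j => - H i j with hM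
  have hp : M.PosSemidef := by
    refine .of_dotProduct_mulVec_nonneg ?_ fun x => ?_
    · ext i j; simp [hM, hs i j]
    · have := hH x
      have e : star x ⬝ᵥ (M.mulVec x) = - ∑ i, ∑ j, H i j * x i * x j := by
        simp only [dotProduct, Matrix.mulVec, hM, Matrix.of_apply, Pi.star_apply, star_trivial,
          Finset.mul_sum, ← Finset.sum_neg_distrib]
        refine Finset.sum_congr rfl fun i _ => Finset.sum_congr rfl fun j _ => by ring
      rw [e]; linarith
  obtain ⟨B, hB⟩ := CStarAlgebra.nonneg_iff_eq_star_mul_self.mp hp.nonneg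
  have e : ∀ i j, H i j = - ∑ k, B k i * B k j := by
    intro i j
    have := congrFun (congrFun hB i) j
    simp only [hM, Matrix.of_apply, Matrix.star_eq_conjTranspose, Matrix.mul_apply,
      Matrix.conjTranspose_apply, star_trivial] at this
    linarith
  have e2 : ∑ i, ∑ j, A i j * H i j = - ∑ k, ∑ i, ∑ j, A i j * B k i * B k j := by
    rw [show ∑ k, ∑ i, ∑ j, A i j * B k i * B k j = ∑ i, ∑ k, ∑ j, A i j * B k i * B k j from
      Finset.sum_comm, ← Finset.sum_neg_distrib]
    refine Finset.sum_congr rfl fun i _ => ?_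
    rw [show ∑ k, ∑ j, A i j * B k i * B k j = ∑ j, ∑ k, A i j * B k i * B k j from
      Finset.sum_comm, ← Finset.sum_neg_distrib]
    refine Finset.sum_congr rfl fun j _ => ?_
    rw [e, mul_neg, Finset.mul_sum]
    simp only [mul_assoc]
  rw [e2, neg_nonpos]
  exact Finset.sum_nonneg fun k _ => hA _

lemma pd_pd_eq {n : ℕ} {f : (Fin (n + 1) → ℝ) → ℝ} {x : Fin (n + 1) → ℝ}
    (hf : ContDiffAt ℝ 2 f x) (i j : Fin (n + 1)) :
    pd i (pd j f) x = fderiv ℝ (fderiv ℝ f) x (Pi.single i 1) (Pi.single j 1) := by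
  have h1 : DifferentiableAt ℝ (fderiv ℝ f) x :=
    (hf.fderiv_right (m := 1) (by norm_num)).differentiableAt (by norm_num)
  have := (h1.hasFDerivAt.clm_apply (hasFDerivAt_const (Pi.single j (1:ℝ)) x)).fderiv
  show fderiv ℝ (fun y => fderiv ℝ f y (Pi.single j 1)) x _ = _
  rw [this]; simp

/-- The Hessian at a local maximum is nonpositive. -/
lemma hess_nonpos {n : ℕ} {h : (Fin (n + 1) → ℝ) → ℝ} {x : Fin (n + 1) → ℝ}
    (hf : ContDiffAt ℝ 2 h x) (hm : IsLocalMax h x) (v : Fin (n + 1) → ℝ) :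
    fderiv ℝ (fderiv ℝ h) x v v ≤ 0 := by
  by_contra! hpos
  have h1 : DifferentiableAt ℝ (fderiv ℝ h) x :=
    (hf.fderiv_right (m := 1) (by norm_num)).differentiableAt (by norm_num)
  set ℓ : ℝ → (Fin (n + 1) → ℝ) := fun s => x + s • v with hℓ
  have hℓ0 : ℓ 0 = x := by simp [hℓ]
  have hℓd : ∀ s, HasDerivAt ℓ v s := fun s => by
    have := ((hasDerivAt_id s).smul_const v).const_add x
    rw [one_smul] at this
    exact this
  have hℓc : Tendsto ℓ (nhds 0) (nhds x) := by
    have := (hℓd 0).continuousAt.tendsto; rwa [hℓ0] at this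
  have hev : ∀ᶠ y in nhds x, DifferentiableAt ℝ h y := by
    filter_upwards [hf.eventually (by norm_num)] with y hy
    exact hy.differentiableAt (by norm_num)
  have hd1 : deriv (h ∘ ℓ) =ᶠ[nhds 0] fun s => fderiv ℝ h (ℓ s) v := by
    filter_upwards [hℓc.eventually hev] with s hs
    exact (hs.hasFDerivAt.comp_hasDerivAt s (hℓd s)).deriv
  have hd2 : deriv (deriv (h ∘ ℓ)) 0 = fderiv ℝ (fderiv ℝ h) x v v := by
    rw [hd1.deriv_eq]
    have h1' : HasFDerivAt (fderiv ℝ h) (fderiv ℝ (fderiv ℝ h) x) (ℓ 0) := by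
      rw [hℓ0]; exact h1.hasFDerivAt
    have := (h1'.comp_hasDerivAt 0 (hℓd 0)).clm_apply (hasDerivAt_const 0 v)
    simpa using this.deriv
  have hmax : IsLocalMax (h ∘ ℓ) 0 := by
    have := hℓc.eventually hm
    filter_upwards [this] with s hs
    simpa [hℓ0] using hs
  have hc : ContinuousAt (h ∘ ℓ) 0 := by
    refine ContinuousAt.comp ?_ (hℓd 0).continuousAt
    rw [hℓ0]; exact hf.continuousAt
  have hmin := isLocalMin_of_deriv_deriv_pos (by rw [hd2]; exact hpos) hmax.deriv_eq_zero hc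
  have hconst : (h ∘ ℓ) =ᶠ[nhds 0] fun _ => (h ∘ ℓ) 0 := by
    filter_upwards [hmax, hmin] with s h1 h2 using le_antisymm h1 h2
  have hz : deriv (h ∘ ℓ) =ᶠ[nhds 0] fun _ => 0 := by
    filter_upwards [hconst.eventuallyEq_nhds] with s hs
    rw [hs.deriv_eq]; simp
  rw [← hd2, hz.deriv_eq] at hpos
  simp at hpos

/-- The second-order part of the maximum principle, for a possibly nonsymmetric matrix `A`. -/
lemma touching {n : ℕ} {f g : (Fin (n + 1) → ℝ) → ℝ} {x : Fin (n + 1) → ℝ}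
    (hf : ContDiffAt ℝ 2 f x) (hg : ContDiffAt ℝ 2 g x) (hm : IsLocalMax (fun y => f y - g y) x)
    (A : Fin (n + 1) → Fin (n + 1) → ℝ)
    (hA : ∀ ξ : Fin (n + 1) → ℝ, 0 ≤ ∑ i, ∑ j, A i j * ξ i * ξ j) :
    (∀ j, pd j f x = pd j g x) ∧
    ∑ i, ∑ j, A i j * pd i (pd j f) x ≤ ∑ i, ∑ j, A i j * pd i (pd j g) x := by
  have hsub : ContDiffAt ℝ 2 (fun y => f y - g y) x := hf.sub hg
  have hpd : ∀ j, pd j (fun y => f y - g y) =ᶠ[nhds x] fun y => pd j f y - pd j g y := by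
    intro j
    filter_upwards [hf.eventually (by norm_num), hg.eventually (by norm_num)] with y h1 h2
    simp only [pd]
    rw [fderiv_fun_sub (h1.differentiableAt (by norm_num)) (h2.differentiableAt (by norm_num))]
    rfl
  refine ⟨fun j => ?_, ?_⟩
  · have h1 := (hpd j).self_of_nhds
    have h2 : pd j (fun y => f y - g y) x = 0 := by
      simp only [pd]; rw [hm.fderiv_eq_zero]; rfl
    simp only [] at h1
    linarith
  · have hpp : ∀ i j, pd i (pd j (fun y => f y - g y)) x =
        pd i (pd j f) x - pd i (pd j g) x := by
      intro i j
      have d1 : ∀ {f : (Fin (n + 1) → ℝ) → ℝ}, ContDiffAt ℝ 2 f x →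
          DifferentiableAt ℝ (pd j f) x := fun {f} hf =>
        ((hf.fderiv_right (m := 1) (by norm_num)).differentiableAt (by norm_num)).clm_apply
          (differentiableAt_const _)
      show fderiv ℝ _ x _ = _
      rw [(hpd j).fderiv_eq, fderiv_fun_sub (d1 hf) (d1 hg)]
      rfl
    have hsym := hsub.isSymmSndFDerivAt (by simp)
    have := trace_mul_nonpos A (fun i j => pd i (pd j (fun y => f y - g y)) x) hA
      (fun i j => by
        simp only [pd_pd_eq hsub]
        exact hsym.eq _ _)
      (fun ξ => by
        have e : ∑ i, ∑ j, pd i (pd j (fun y => f y - g y)) x * ξ i * ξ j =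
            fderiv ℝ (fderiv ℝ (fun y => f y - g y)) x ξ ξ := by
          have hv : ξ = ∑ i, ξ i • (Pi.single i (1:ℝ) : Fin (n + 1) → ℝ) := by
            ext j; simp [Finset.sum_apply, Pi.single_apply]
          conv_rhs => rw [hv]
          simp only [pd_pd_eq hsub, map_sum, map_smul, _root_.sum_apply,
            _root_.smul_apply, smul_eq_mul, Finset.mul_sum]
          rw [Finset.sum_comm]
          refine Finset.sum_congr rfl fun i _ => Finset.sum_congr rfl fun j _ => by ring
        simp only [e]
        exact hess_nonpos hsub hm ξ)
    simp only [hpp, mul_sub, Finset.sum_sub_distrib] at this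
    linarith

/-! ### Solutions extended by zero and the expanded operator -/

/-- Ancient solutions extended by zero outside the strip, hence continuous on the whole space. -/
structure Sol {n : ℕ} (Ω₀ : Set (Fin n → ℝ))
    (a : (Fin (n + 1) → ℝ) → Fin (n + 1) → Fin (n + 1) → ℝ)
    (b : (Fin (n + 1) → ℝ) → Fin (n + 1) → ℝ) (c : (Fin (n + 1) → ℝ) → ℝ)
    (u : ℝ → (Fin (n + 1) → ℝ) → ℝ) : Prop where
  cont : ContinuousOn (fun p : ℝ × (Fin (n + 1) → ℝ) => u p.1 p.2) (Iic (0 : ℝ) ×ˢ univ)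
  zero : ∀ t ≤ (0 : ℝ), ∀ x ∉ strip Ω₀, u t x = 0
  reg : ∀ t ≤ (0 : ℝ), ContDiffOn ℝ 2 (u t) (strip Ω₀)
  pde : ∀ t ≤ (0 : ℝ), ∀ x ∈ strip Ω₀,
    HasDerivWithinAt (fun s => u s x) (Lop a b c (u t) x) (Iic (0 : ℝ)) t

lemma isOpen_strip {n : ℕ} {Ω₀ : Set (Fin n → ℝ)} (h : IsOpen Ω₀) : IsOpen (strip Ω₀) := by
  have : Continuous (fun x : Fin (n + 1) → ℝ => fun i : Fin n => x i.succ) := by fun_prop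
  exact h.preimage this

lemma pd_const_mul {n : ℕ} (k : ℝ) (i : Fin (n + 1)) (f : (Fin (n + 1) → ℝ) → ℝ) :
    pd i (fun y => k * f y) = fun y => k * pd i f y := by
  ext y
  simp only [pd]
  have : (fun y => k * f y) = fun y => k • f y := rfl
  rw [this]
  have h2 : fderiv ℝ (fun y => k • f y) y = k • fderiv ℝ f y :=
    congrFun (fderiv_const_smul_field (𝕜 := ℝ) (f := f) k) y
  rw [h2]
  rfl

lemma Lop_const_mul {n : ℕ} (a : (Fin (n + 1) → ℝ) → Fin (n + 1) → Fin (n + 1) → ℝ)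
    (b : (Fin (n + 1) → ℝ) → Fin (n + 1) → ℝ) (c : (Fin (n + 1) → ℝ) → ℝ) (k : ℝ)
    (f : (Fin (n + 1) → ℝ) → ℝ) (x : Fin (n + 1) → ℝ) :
    Lop a b c (fun y => k * f y) x = k * Lop a b c f x := by
  simp only [Lop, pd_const_mul]
  have : ∀ i, (fun y => ∑ j, a y i j * (k * pd j f y)) =
      fun y => k * ∑ j, a y i j * pd j f y := by
    intro i; ext y; rw [Finset.mul_sum]
    exact Finset.sum_congr rfl fun j _ => by ring
  simp only [this, pd_const_mul]
  have h1 : ∑ i, b x i * (k * pd i f x) = k * ∑ i, b x i * pd i f x := by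
    rw [Finset.mul_sum]
    exact Finset.sum_congr rfl fun j _ => by ring
  rw [h1, ← Finset.mul_sum]
  ring

lemma Sol.neg {n : ℕ} {Ω₀ : Set (Fin n → ℝ)}
    {a : (Fin (n + 1) → ℝ) → Fin (n + 1) → Fin (n + 1) → ℝ}
    {b : (Fin (n + 1) → ℝ) → Fin (n + 1) → ℝ} {c : (Fin (n + 1) → ℝ) → ℝ}
    {u : ℝ → (Fin (n + 1) → ℝ) → ℝ} (h : Sol Ω₀ a b c u) :
    Sol Ω₀ a b c (fun t x => -1 * u t x) where
  cont := continuousOn_const.mul h.cont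
  zero t ht x hx := by simp [h.zero t ht x hx]
  reg t ht := contDiffOn_const.mul (h.reg t ht)
  pde t ht x hx := by
    rw [Lop_const_mul]
    exact (h.pde t ht x hx).const_mul (-1)

lemma differentiableAt_pd {n : ℕ} {f : (Fin (n + 1) → ℝ) → ℝ} {x : Fin (n + 1) → ℝ}
    (hf : ContDiffAt ℝ 2 f x) (j : Fin (n + 1)) : DifferentiableAt ℝ (pd j f) x :=
  ((hf.fderiv_right (m := 1) (by norm_num)).differentiableAt (by norm_num)).clm_apply
    (differentiableAt_const _)

lemma contDiffAt_pd {n : ℕ} {f : (Fin (n + 1) → ℝ) → ℝ} {x : Fin (n + 1) → ℝ}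
    (hf : ContDiffAt ℝ 2 f x) (j : Fin (n + 1)) : ContDiffAt ℝ 1 (pd j f) x :=
  (hf.fderiv_right (m := 1) (by norm_num)).clm_apply contDiffAt_const

lemma continuousAt_pd {n : ℕ} {f : (Fin (n + 1) → ℝ) → ℝ} {x : Fin (n + 1) → ℝ}
    (hf : ContDiffAt ℝ 1 f x) (j : Fin (n + 1)) : ContinuousAt (pd j f) x :=
  ((hf.fderiv_right (m := 0) (by norm_num)).continuousAt).clm_apply continuousAt_const

/-- Nondivergence form of the operator. -/
lemma Lop_eq {n : ℕ} {a : (Fin (n + 1) → ℝ) → Fin (n + 1) → Fin (n + 1) → ℝ}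
    {b : (Fin (n + 1) → ℝ) → Fin (n + 1) → ℝ} {c : (Fin (n + 1) → ℝ) → ℝ}
    {f : (Fin (n + 1) → ℝ) → ℝ} {x : Fin (n + 1) → ℝ} (hf : ContDiffAt ℝ 2 f x)
    (ha : ∀ i j, ContDiffAt ℝ 1 (fun y => a y i j) x) :
    Lop a b c f x = (∑ i, ∑ j, a x i j * pd i (pd j f) x) +
      (∑ i, ∑ j, pd i (fun y => a y i j) x * pd j f x) + (∑ i, b x i * pd i f x) + c x * f x := by
  have : ∀ i, pd i (fun y => ∑ j, a y i j * pd j f y) x =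
      (∑ j, a x i j * pd i (pd j f) x) + ∑ j, pd i (fun y => a y i j) x * pd j f x := by
    intro i
    have h1 : HasFDerivAt (fun y => ∑ j, a y i j * pd j f y)
        (∑ j, (a x i j • fderiv ℝ (pd j f) x + pd j f x • fderiv ℝ (fun y => a y i j) x)) x :=
      HasFDerivAt.fun_sum fun j _ =>
        ((ha i j).differentiableAt (by norm_num)).hasFDerivAt.mul
          (differentiableAt_pd hf j).hasFDerivAt
    show fderiv ℝ _ x _ = _
    rw [h1.fderiv, _root_.sum_apply, ← Finset.sum_add_distrib]
    refine Finset.sum_congr rfl fun j _ => ?_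
    simp only [_root_.add_apply, _root_.smul_apply, smul_eq_mul, pd]
    ring
  simp only [Lop, this, Finset.sum_add_distrib]

lemma bound_family {ι X : Type*} [Fintype ι] [TopologicalSpace X] {K : Set X} (hK : IsCompact K)
    (f : ι → X → ℝ) (hf : ∀ i, ContinuousOn (f i) K) :
    ∃ m, 0 ≤ m ∧ ∀ i, ∀ x ∈ K, |f i x| ≤ m := by
  have : ContinuousOn (fun x => ∑ i, |f i x|) K :=
    continuousOn_finsetSum _ fun i _ => (hf i).abs
  obtain ⟨m, hm⟩ := hK.exists_bound_of_continuousOn this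
  refine ⟨max m 0, le_max_right _ _, fun i x hx => ?_⟩
  have h1 := hm x hx
  rw [Real.norm_eq_abs, abs_of_nonneg (Finset.sum_nonneg fun _ _ => abs_nonneg _)] at h1
  exact ((Finset.single_le_sum (f := fun i => |f i x|) (fun _ _ => abs_nonneg _)
    (Finset.mem_univ i)).trans h1).trans (le_max_left _ _)

lemma pd_add_quad {n : ℕ} {f : (Fin (n + 1) → ℝ) → ℝ} {x : Fin (n + 1) → ℝ}
    (hf : ContDiffAt ℝ 2 f x) (A : ℝ) (x₀ : Fin (n + 1) → ℝ) :
    ContDiffAt ℝ 2 (fun y => f y + A * ∑ i, (y i - x₀ i) ^ 2) x ∧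
    (∀ j, pd j (fun y => f y + A * ∑ i, (y i - x₀ i) ^ 2) x = pd j f x + 2 * A * (x j - x₀ j)) ∧
    (∀ i j, pd i (pd j (fun y => f y + A * ∑ i, (y i - x₀ i) ^ 2)) x =
      pd i (pd j f) x + if i = j then 2 * A else 0) := by
  have hq : ContDiff ℝ 2 (fun y : Fin (n + 1) → ℝ => A * ∑ i, (y i - x₀ i) ^ 2) := by
    fun_prop
  have hq1 : ∀ j y, pd j (fun y : Fin (n + 1) → ℝ => A * ∑ i, (y i - x₀ i) ^ 2) y =
      2 * A * (y j - x₀ j) := by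
    intro j y
    have h1 : HasFDerivAt (fun y : Fin (n + 1) → ℝ => A * ∑ i, (y i - x₀ i) ^ 2)
        (A • ∑ i, (2 * (y i - x₀ i)) • ContinuousLinearMap.proj (R := ℝ) i) y := by
      refine HasFDerivAt.const_mul (HasFDerivAt.fun_sum fun i _ => ?_) A
      have := ((hasFDerivAt_apply (𝕜 := ℝ) i y).sub_const (x₀ i)).pow 2
      simpa using this
    show fderiv ℝ _ y _ = _
    rw [h1.fderiv]
    simp [_root_.sum_apply, Pi.single_apply]
    ring
  have hev : ∀ j, pd j (fun y => f y + A * ∑ i, (y i - x₀ i) ^ 2) =ᶠ[nhds x]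
      fun y => pd j f y + 2 * A * (y j - x₀ j) := by
    intro j
    filter_upwards [hf.eventually (by norm_num)] with y hy
    have h1 : fderiv ℝ (fun y => f y + A * ∑ i, (y i - x₀ i) ^ 2) y = _ :=
      fderiv_fun_add (hy.differentiableAt (by norm_num)) (hq.differentiable (by norm_num) y)
    have h2 := hq1 j y
    simp only [pd] at h2 ⊢
    rw [h1, _root_.add_apply, h2]
  refine ⟨hf.add hq.contDiffAt, fun j => (hev j).self_of_nhds, fun i j => ?_⟩
  have h3 : HasFDerivAt (fun y : Fin (n + 1) → ℝ => 2 * A * (y j - x₀ j))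
      ((2 * A) • ContinuousLinearMap.proj (R := ℝ) j) x :=
    ((hasFDerivAt_apply (𝕜 := ℝ) j x).sub_const (x₀ j)).const_mul (2 * A)
  show fderiv ℝ _ x _ = _
  rw [(hev j).fderiv_eq, ((differentiableAt_pd hf j).hasFDerivAt.fun_add h3).fderiv, _root_.add_apply]
  simp [Pi.single_apply, pd, eq_comm]

/-! ### Lipschitz bound in time from the maximum principle -/

/-- The left derivative at the right end point of a maximum is nonnegative. -/
lemma left_deriv_nonneg {φ : ℝ → ℝ} {d s t : ℝ} (hts : t < s) (hd : HasDerivWithinAt φ d (Iic s) s)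
    (hm : ∀ r ∈ Icc t s, φ r ≤ φ s) : 0 ≤ d := by
  have h1 : HasDerivWithinAt φ d (Iio s) s := hd.mono Iio_subset_Iic_self
  rw [hasDerivWithinAt_iff_tendsto_slope' (by simp)] at h1
  refine ge_of_tendsto h1 ?_
  filter_upwards [Ioo_mem_nhdsLT hts] with r hr
  rw [slope_def_field]
  exact div_nonneg_of_nonpos (by linarith [hm r ⟨hr.1.le, hr.2.le⟩]) (by linarith [hr.2])

/-- One-sided Lipschitz bound in time, forward from a fixed time `t` and locally uniform in space.
Only the derivatives of the fixed slice `u t` enter: a quadratic barrier above `u t` is compared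
with `u` by the maximum principle. -/
lemma forward_upper {n : ℕ} {Ω₀ : Set (Fin n → ℝ)} (hΩ : IsOpen Ω₀) {lam Lam : ℝ} (hlam : 0 < lam)
    {a : (Fin (n + 1) → ℝ) → Fin (n + 1) → Fin (n + 1) → ℝ}
    {b : (Fin (n + 1) → ℝ) → Fin (n + 1) → ℝ} {c : (Fin (n + 1) → ℝ) → ℝ}
    (hG : GoodCoeffs Ω₀ lam Lam a b c)
    {u : ℝ → (Fin (n + 1) → ℝ) → ℝ} (hu : Sol Ω₀ a b c u) {K : Set (Fin (n + 1) → ℝ)}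
    (hK : IsCompact K) (hKs : K ⊆ strip Ω₀) {t : ℝ} (ht : t ≤ 0) :
    ∃ M, 0 ≤ M ∧ ∀ s ∈ Icc t 0, ∀ x ∈ K, u s x - u t x ≤ M * (s - t) := by
  have hso := isOpen_strip hΩ
  obtain ⟨ρ, hρ, hρs⟩ := hK.exists_cthickening_subset_open hso hKs
  set Kρ := Metric.cthickening ρ K with hKρ
  have hKc : IsCompact Kρ := hK.cthickening
  have hreg : ∀ s ≤ (0:ℝ), ∀ x ∈ Kρ, ContDiffAt ℝ 2 (u s) x := fun s hs x hx =>
    (hu.reg s hs).contDiffAt (hso.mem_nhds (hρs hx))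
  have hareg : ∀ i j, ∀ x ∈ Kρ, ContDiffAt ℝ 1 (fun y => a y i j) x := fun i j x hx =>
    (hG.a_reg i j).contDiffAt (hso.mem_nhds (hρs hx))
  obtain ⟨m0, hm0⟩ := ((isCompact_Icc (a := t) (b := 0)).prod hKc).exists_bound_of_continuousOn
    (hu.cont.mono (prod_mono (fun s hs => hs.2) (subset_univ _)))
  obtain ⟨m1, hm1p, hm1⟩ := bound_family hKc (fun j => pd j (u t)) fun j x hx =>
    (continuousAt_pd ((hreg t ht x hx).of_le (by norm_num)) j).continuousWithinAt
  obtain ⟨m2, hm2p, hm2⟩ := bound_family hKc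
    (fun p : Fin (n + 1) × Fin (n + 1) => pd p.1 (pd p.2 (u t))) fun p x hx =>
      (continuousAt_pd (contDiffAt_pd (hreg t ht x hx) p.2) p.1).continuousWithinAt
  obtain ⟨m3, hm3p, hm3⟩ := bound_family hKc
    (fun p : Fin (n + 1) × Fin (n + 1) => pd p.1 (fun y => a y p.1 p.2)) fun p x hx =>
      (continuousAt_pd (hareg p.1 p.2 x hx) p.1).continuousWithinAt
  obtain ⟨Mb, hMb⟩ := hG.b_bdd
  obtain ⟨Mc, hMc⟩ := hG.c_bdd
  -- steep enough for the barrier to dominate `u s - u t` on the boundary of a `ρ`-ball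
  set A := 2 * |m0| / ρ ^ 2 with hA
  have hAp : 0 ≤ A := by positivity
  -- a bound for `L` applied to the barrier
  set Cst := (∑ _i : Fin (n + 1), ∑ _j : Fin (n + 1), |Lam| * (m2 + 2 * A)) +
    (∑ _i : Fin (n + 1), ∑ _j : Fin (n + 1), m3 * (m1 + 2 * A * ρ)) +
    (∑ _i : Fin (n + 1), |Mb| * (m1 + 2 * A * ρ)) + |Mc| * |m0| with hCst
  have hCp : 0 ≤ Cst := by positivity
  refine ⟨Cst + 1, by linarith, fun s hs x₀ hx₀ => ?_⟩
  by_contra! hcon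
  have hball : Metric.closedBall x₀ ρ ⊆ Kρ := Metric.closedBall_subset_cthickening hx₀ ρ
  -- `u` minus the barrier is positive at `(s, x₀)`; its maximum is then attained at an interior
  -- point and a later time, where the equation is violated
  set D : ℝ × (Fin (n + 1) → ℝ) → ℝ := fun p =>
    u p.1 p.2 - u t p.2 - (Cst + 1) * (p.1 - t) - A * ∑ i, (p.2 i - x₀ i) ^ 2 with hD
  have hDc : ContinuousOn D (Icc t 0 ×ˢ Metric.closedBall x₀ ρ) := by
    have h1 : ContinuousOn (fun p : ℝ × (Fin (n + 1) → ℝ) => u p.1 p.2)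
        (Icc t 0 ×ˢ Metric.closedBall x₀ ρ) :=
      hu.cont.mono (prod_mono (fun s hs => hs.2) (subset_univ _))
    have h2 : ContinuousOn (fun p : ℝ × (Fin (n + 1) → ℝ) => u t p.2)
        (Icc t 0 ×ˢ Metric.closedBall x₀ ρ) := by
      have : ContinuousOn (fun p : ℝ × (Fin (n + 1) → ℝ) => (t, p.2))
        (Icc t 0 ×ˢ Metric.closedBall x₀ ρ) := by fun_prop
      exact hu.cont.comp this fun p hp => ⟨ht, mem_univ _⟩
    exact ((h1.sub h2).sub (by fun_prop)).sub (by fun_prop)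
  have hmem0 : (s, x₀) ∈ Icc t 0 ×ˢ Metric.closedBall x₀ ρ :=
    ⟨hs, Metric.mem_closedBall_self hρ.le⟩
  obtain ⟨⟨s', x'⟩, ⟨hs', hx'⟩, hmax⟩ := (isCompact_Icc.prod
    (isCompact_closedBall x₀ ρ)).exists_isMaxOn ⟨_, hmem0⟩ hDc
  have hpos : 0 < D (s', x') := by
    have h1 : D (s, x₀) ≤ D (s', x') := hmax hmem0
    have h2 : 0 < D (s, x₀) := by
      simp only [hD, sub_self]; norm_num; linarith
    linarith
  simp only at hs' hx'
  have hxK : x' ∈ Kρ := hball hx'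
  have hsum : 0 ≤ ∑ i, (x' i - x₀ i) ^ 2 := Finset.sum_nonneg fun _ _ => sq_nonneg _
  have hts : t < s' := by
    rcases hs'.1.eq_or_lt with h | h
    · subst h
      simp only [hD, sub_self] at hpos
      nlinarith
    · exact h
  have hb : ∀ r ∈ Icc t 0, ∀ y ∈ Kρ, |u r y| ≤ |m0| := fun r hr y hy =>
    (hm0 (r, y) ⟨hr, hy⟩).trans (le_abs_self _)
  have hcoord : ∀ i, |x' i - x₀ i| ≤ ρ := fun i => by
    have := (dist_pi_le_iff hρ.le).1 hx' i
    rwa [Real.dist_eq] at this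
  have hin : x' ∈ Metric.ball x₀ ρ := by
    by_contra hnot
    have hd : ρ ≤ dist x' x₀ := by simpa using hnot
    have : ∃ i, ρ ≤ |x' i - x₀ i| := by
      by_contra! h
      have := (dist_pi_lt_iff hρ).2 (fun i => by rw [Real.dist_eq]; exact h i)
      linarith
    obtain ⟨i, hi⟩ := this
    have h1 : ρ ^ 2 ≤ ∑ i, (x' i - x₀ i) ^ 2 := by
      refine le_trans ?_ (Finset.single_le_sum (f := fun i => (x' i - x₀ i) ^ 2)
        (fun _ _ => sq_nonneg _) (Finset.mem_univ i))
      rw [← sq_abs (x' i - x₀ i)]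
      gcongr
    have h2 : A * ρ ^ 2 = 2 * |m0| := by rw [hA]; field_simp
    have h3 := mul_le_mul_of_nonneg_left h1 hAp
    have h4 := abs_le.1 (hb s' hs' x' hxK)
    have h5 := abs_le.1 (hb t ⟨le_rfl, ht⟩ x' hxK)
    have h6 : 0 ≤ (Cst + 1) * (s' - t) := by have := hs'.1; apply mul_nonneg <;> linarith
    simp only [hD] at hpos
    linarith
  have hxs : x' ∈ strip Ω₀ := hρs hxK
  have htime : Cst + 1 ≤ Lop a b c (u s') x' := by
    have h1 : HasDerivWithinAt (fun r => u r x' - (Cst + 1) * r)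
        (Lop a b c (u s') x' - (Cst + 1)) (Iic s') s' := by
      have := ((hu.pde s' hs'.2 x' hxs).mono (Iic_subset_Iic.2 hs'.2)).fun_sub
        ((hasDerivWithinAt_id s' (Iic s')).const_mul (Cst + 1))
      simpa using this
    have := left_deriv_nonneg hts h1 fun r hr => by
      have h2 : D (r, x') ≤ D (s', x') := hmax (⟨⟨hr.1, hr.2.trans hs'.2⟩, hx'⟩ :
        (r, x') ∈ Icc t 0 ×ˢ Metric.closedBall x₀ ρ)
      simp only [hD] at h2
      linarith
    linarith
  have hq := pd_add_quad (hreg t ht x' hxK) A x₀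
  have hloc : IsLocalMax (fun y => u s' y - (u t y + A * ∑ i, (y i - x₀ i) ^ 2)) x' := by
    filter_upwards [Metric.isOpen_ball.mem_nhds hin] with y hy
    have h2 : D (s', y) ≤ D (s', x') := hmax (⟨hs', Metric.ball_subset_closedBall hy⟩ :
        (s', y) ∈ Icc t 0 ×ˢ Metric.closedBall x₀ ρ)
    simp only [hD] at h2
    linarith
  have htouch := touching (hreg s' hs'.2 x' hxK) hq.1 hloc (a x') fun ξ =>
    le_trans (mul_nonneg hlam.le (Finset.sum_nonneg fun _ _ => sq_nonneg _))
      (hG.elliptic x' hxs ξ)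
  have hgrad : ∀ j, |pd j (u s') x'| ≤ m1 + 2 * A * ρ := fun j => by
    rw [htouch.1 j, hq.2.1 j]
    refine (abs_add_le _ _).trans (add_le_add (hm1 j x' hxK) ?_)
    rw [abs_mul, abs_of_nonneg (by positivity : 0 ≤ 2 * A)]
    exact mul_le_mul_of_nonneg_left (hcoord j) (by positivity)
  have hbound : Lop a b c (u s') x' ≤ Cst := by
    rw [Lop_eq (hreg s' hs'.2 x' hxK) (fun i j => hareg i j x' hxK), hCst]
    refine add_le_add (add_le_add (add_le_add (htouch.2.trans ?_) ?_) ?_) ?_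
    · refine Finset.sum_le_sum fun i _ => Finset.sum_le_sum fun j _ => ?_
      rw [hq.2.2 i j]
      refine (le_abs_self _).trans ?_
      rw [abs_mul]
      refine mul_le_mul ((hG.a_bdd x' hxs i j).trans (le_abs_self _)) ?_ (abs_nonneg _)
        (abs_nonneg _)
      refine (abs_add_le _ _).trans (add_le_add (hm2 (i, j) x' hxK) ?_)
      split_ifs
      · rw [abs_of_nonneg (by positivity)]
      · simpa using hAp
    · refine Finset.sum_le_sum fun i _ => Finset.sum_le_sum fun j _ => ?_
      refine (le_abs_self _).trans ?_
      rw [abs_mul]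
      exact mul_le_mul (hm3 (i, j) x' hxK) (hgrad j) (abs_nonneg _) hm3p
    · refine Finset.sum_le_sum fun i _ => ?_
      refine (le_abs_self _).trans ?_
      rw [abs_mul]
      exact mul_le_mul ((hMb x' hxs i).trans (le_abs_self _)) (hgrad i) (abs_nonneg _)
        (abs_nonneg _)
    · refine (le_abs_self _).trans ?_
      rw [abs_mul]
      exact mul_le_mul ((hMc x' hxs).trans (le_abs_self _)) (hb s' hs' x' hxK) (abs_nonneg _)
        (abs_nonneg _)
  linarith

lemma forward_lipschitz {n : ℕ} {Ω₀ : Set (Fin n → ℝ)} (hΩ : IsOpen Ω₀) {lam Lam : ℝ}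
    (hlam : 0 < lam) {a : (Fin (n + 1) → ℝ) → Fin (n + 1) → Fin (n + 1) → ℝ}
    {b : (Fin (n + 1) → ℝ) → Fin (n + 1) → ℝ} {c : (Fin (n + 1) → ℝ) → ℝ}
    (hG : GoodCoeffs Ω₀ lam Lam a b c)
    {u : ℝ → (Fin (n + 1) → ℝ) → ℝ} (hu : Sol Ω₀ a b c u) {K : Set (Fin (n + 1) → ℝ)}
    (hK : IsCompact K) (hKs : K ⊆ strip Ω₀) {t : ℝ} (ht : t ≤ 0) :
    ∃ M, 0 ≤ M ∧ ∀ s ∈ Icc t 0, ∀ x ∈ K, |u s x - u t x| ≤ M * (s - t) := by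
  obtain ⟨M, hM, h⟩ := forward_upper hΩ hlam hG hu hK hKs ht
  obtain ⟨M', hM', h'⟩ := forward_upper hΩ hlam hG hu.neg hK hKs ht
  refine ⟨M + M', by positivity, fun s hs x hx => ?_⟩
  have h1 := h s hs x hx
  have h2 := h' s hs x hx
  have h3 := mul_nonneg hM (sub_nonneg.2 hs.1)
  have h4 := mul_nonneg hM' (sub_nonneg.2 hs.1)
  rw [abs_le]
  constructor <;> linarith

/-! ### Algebra of the energy estimate -/

lemma bilin_bound {m : ℕ} (a : Fin m → Fin m → ℝ) {Lam : ℝ} (ha : ∀ i j, |a i j| ≤ Lam)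
    (x y : Fin m → ℝ) : |∑ i, ∑ j, a i j * x i * y j| ≤ Lam * (∑ i, |x i|) * ∑ j, |y j| := by
  rw [mul_assoc, Finset.sum_mul_sum, Finset.mul_sum]
  refine (Finset.abs_sum_le_sum_abs _ _).trans (Finset.sum_le_sum fun i _ => ?_)
  rw [Finset.mul_sum]
  refine (Finset.abs_sum_le_sum_abs _ _).trans (Finset.sum_le_sum fun j _ => ?_)
  rw [abs_mul, abs_mul, mul_assoc]
  exact mul_le_mul_of_nonneg_right (ha i j) (by positivity)

lemma lin_bound {m : ℕ} (b : Fin m → ℝ) {β : ℝ} (hb : ∀ i, |b i| ≤ β)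
    (x : Fin m → ℝ) : |∑ i, b i * x i| ≤ β * ∑ i, |x i| := by
  rw [Finset.mul_sum]
  refine (Finset.abs_sum_le_sum_abs _ _).trans (Finset.sum_le_sum fun i _ => ?_)
  rw [abs_mul]
  exact mul_le_mul_of_nonneg_right (hb i) (abs_nonneg _)

/-- The scalar inequality behind the pointwise energy estimate (everything divided by `z²`);
`Q = ∑ qᵢ²` and `S = ∑ |qᵢ|`, so that `S² ≤ N Q`. -/
lemma scalar_ineq {lam Lam κ β ε z δ Q S N : ℝ} (hlam : 0 < lam) (hLam : 0 ≤ Lam) (hκ : 0 ≤ κ)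
    (hβ : 0 ≤ β) (hβε : β ^ 2 = ε) (hN : 0 < N)
    (hSQ : S ^ 2 ≤ N * Q) :
    -12 * lam * Q + (16 * z + 12 * δ) * κ * Lam * S + 4 * z * (z + δ) * κ ^ 2 * Lam
      + 4 * z * β * (S + (z + δ) * κ) + 8 * z * (z + δ) * ε ≤
    -8 * lam * Q + (64 * κ ^ 2 * Lam ^ 2 * N / lam + 2 * ε * N / lam
      + 8 * (κ ^ 2 * Lam + β * κ + 2 * ε)) * z ^ 2
      + (36 * κ ^ 2 * Lam ^ 2 * N / lam + 4 * (κ ^ 2 * Lam + β * κ + 2 * ε)) * δ ^ 2 := by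
  have young : ∀ p r : ℝ, 0 < r → p * S ≤ r * lam * S ^ 2 / N + p ^ 2 * N / (4 * r * lam) := by
    intro p r hr
    have : r * lam * S ^ 2 / N + p ^ 2 * N / (4 * r * lam) - p * S =
        (2 * r * lam * S - p * N) ^ 2 / (4 * r * lam * N) := by field_simp; ring
    have : 0 ≤ (2 * r * lam * S - p * N) ^ 2 / (4 * r * lam * N) := by positivity
    linarith
  have y1 := young (16 * z * κ * Lam) 1 one_pos
  have y2 := young (12 * δ * κ * Lam) 1 one_pos
  have y3 := young (4 * z * β) 2 two_pos
  have hQ : 4 * (lam * S ^ 2 / N) ≤ 4 * (lam * Q) := by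
    have : S ^ 2 / N ≤ Q := by rw [div_le_iff₀ hN]; linarith
    have := mul_le_mul_of_nonneg_left this hlam.le
    rw [mul_div_assoc]; linarith
  have hzd : z * (z + δ) ≤ 2 * z ^ 2 + δ ^ 2 := by nlinarith [sq_nonneg (z - δ), sq_nonneg δ]
  have hk : 0 ≤ κ ^ 2 * Lam + β * κ + 2 * ε := by rw [← hβε]; positivity
  have h4 := mul_le_mul_of_nonneg_left hzd (mul_nonneg (by norm_num : (0:ℝ) ≤ 4) hk)
  have e1 : (16 * z * κ * Lam) ^ 2 * N / (4 * 1 * lam) = 64 * κ ^ 2 * Lam ^ 2 * N / lam * z ^ 2 := by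
    field_simp; ring
  have e2 : (12 * δ * κ * Lam) ^ 2 * N / (4 * 1 * lam) = 36 * κ ^ 2 * Lam ^ 2 * N / lam * δ ^ 2 := by
    field_simp; ring
  have e3 : (4 * z * β) ^ 2 * N / (4 * 2 * lam) = 2 * ε * N / lam * z ^ 2 := by
    rw [← hβε]; field_simp; ring
  have e4 : 2 * lam * S ^ 2 / N = 2 * (lam * S ^ 2 / N) := by ring
  rw [e1] at y1; rw [e2] at y2; rw [e3, e4] at y3
  rw [one_mul] at y1 y2
  nlinarith

/-- Algebraic core of the energy estimate at a point: `q` is the gradient of the weighted function,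
`ω` the logarithmic gradient of the weight. -/
lemma alg_ineq {m : ℕ} (hm : 0 < m) (a : Fin m → Fin m → ℝ) (b q ω : Fin m → ℝ)
    {lam Lam κ ε c z δ : ℝ} (hlam : 0 < lam) (hLam : 0 ≤ Lam) (hκ : 0 ≤ κ) (hε : 0 ≤ ε)
    (hz : 0 ≤ z) (hδ : 0 ≤ δ)
    (hell : lam * ∑ i, q i ^ 2 ≤ ∑ i, ∑ j, a i j * q i * q j) (ha : ∀ i j, |a i j| ≤ Lam)
    (hb : ∀ i, |b i| ≤ Real.sqrt ε) (hc : c ≤ 2 * ε) (hω : ∑ i, |ω i| ≤ κ) :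
    -12 * z ^ 2 * ∑ i, ∑ j, a i j * q i * (q j - ω j * (z + δ))
      - 4 * z ^ 3 * ∑ i, ∑ j, a i j * ω i * (q j - ω j * (z + δ))
      + 4 * z ^ 3 * ∑ i, b i * (q i - ω i * (z + δ)) + 4 * z ^ 3 * (c * (z + δ)) ≤
    -2 * lam * ∑ i, (2 * z * q i) ^ 2
      + (64 * κ ^ 2 * Lam ^ 2 * m / lam + 2 * ε * m / lam
        + 8 * (κ ^ 2 * Lam + Real.sqrt ε * κ + 2 * ε)) * z ^ 4
      + (36 * κ ^ 2 * Lam ^ 2 * m / lam + 4 * (κ ^ 2 * Lam + Real.sqrt ε * κ + 2 * ε))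
        * δ ^ 2 * z ^ 2 := by
  set S := ∑ i, |q i| with hS
  set Q := ∑ i, q i ^ 2 with hQ
  set W := ∑ i, |ω i| with hW
  have hS0 : 0 ≤ S := Finset.sum_nonneg fun _ _ => abs_nonneg _
  have hW0 : 0 ≤ W := Finset.sum_nonneg fun _ _ => abs_nonneg _
  have hSQ : S ^ 2 ≤ m * Q := by
    have := sq_sum_le_card_mul_sum_sq (s := (Finset.univ : Finset (Fin m))) (f := fun i => |q i|)
    simpa using this
  have split : ∀ x : Fin m → ℝ, ∑ i, ∑ j, a i j * x i * (q j - ω j * (z + δ)) =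
      (∑ i, ∑ j, a i j * x i * q j) - (z + δ) * ∑ i, ∑ j, a i j * x i * ω j := by
    intro x
    rw [Finset.mul_sum, ← Finset.sum_sub_distrib]
    refine Finset.sum_congr rfl fun i _ => ?_
    rw [Finset.mul_sum, ← Finset.sum_sub_distrib]
    exact Finset.sum_congr rfl fun j _ => by ring
  have splitb : ∑ i, b i * (q i - ω i * (z + δ)) =
      (∑ i, b i * q i) - (z + δ) * ∑ i, b i * ω i := by
    rw [Finset.mul_sum, ← Finset.sum_sub_distrib]
    exact Finset.sum_congr rfl fun i _ => by ring
  have eQ : ∑ i, (2 * z * q i) ^ 2 = 4 * z ^ 2 * Q := by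
    rw [hQ, Finset.mul_sum]; exact Finset.sum_congr rfl fun i _ => by ring
  rw [split q, split ω, splitb, eQ]
  have zd : 0 ≤ z + δ := by positivity
  have b1 : |∑ i, ∑ j, a i j * q i * ω j| ≤ Lam * S * κ :=
    (bilin_bound a ha q ω).trans (mul_le_mul_of_nonneg_left hω (by positivity))
  have b2 : |∑ i, ∑ j, a i j * ω i * q j| ≤ Lam * κ * S :=
    (bilin_bound a ha ω q).trans (mul_le_mul_of_nonneg_right
      (mul_le_mul_of_nonneg_left hω hLam) hS0)
  have b3 : |∑ i, ∑ j, a i j * ω i * ω j| ≤ Lam * κ * κ :=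
    (bilin_bound a ha ω ω).trans (mul_le_mul (mul_le_mul_of_nonneg_left hω hLam) hω hW0
      (by positivity))
  have hsq := Real.sqrt_nonneg ε
  have b4 : |∑ i, b i * q i| ≤ Real.sqrt ε * S := lin_bound b hb q
  have b5 : |∑ i, b i * ω i| ≤ Real.sqrt ε * κ :=
    (lin_bound b hb ω).trans (mul_le_mul_of_nonneg_left hω hsq)
  have key := scalar_ineq (lam := lam) (Lam := Lam) (κ := κ) (β := Real.sqrt ε) (ε := ε) (z := z)
    (δ := δ) (Q := Q) (S := S) (N := m) hlam hLam hκ hsq (Real.sq_sqrt hε)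
    (by exact_mod_cast hm) hSQ
  have key2 := mul_le_mul_of_nonneg_left key (sq_nonneg z)
  have z2 : 0 ≤ z ^ 2 := by positivity
  have z3 : 0 ≤ z ^ 3 := by positivity
  have i0 := mul_le_mul_of_nonneg_left hell z2
  have i1 := mul_le_mul_of_nonneg_left (abs_le.1 b1).2 (mul_nonneg z2 zd)
  have i2 := mul_le_mul_of_nonneg_left (abs_le.1 b2).1 z3
  have i3 := mul_le_mul_of_nonneg_left (abs_le.1 b3).2 (mul_nonneg z3 zd)
  have i4 := mul_le_mul_of_nonneg_left (abs_le.1 b4).2 z3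
  have i5 := mul_le_mul_of_nonneg_left (abs_le.1 b5).1 (mul_nonneg z3 zd)
  have i6 := mul_le_mul_of_nonneg_left hc (mul_nonneg z3 zd)
  linarith

/-! ### Calculus of truncations and partial derivatives -/

/-- From the second power on, the truncation `s ↦ (s - δ)₊` is differentiable everywhere. -/
lemma hasDerivAt_pos_pow (δ r : ℝ) (p : ℕ) :
    HasDerivAt (fun s : ℝ => max (s - δ) 0 ^ (p + 2)) ((p + 2) * max (r - δ) 0 ^ (p + 1)) r := by
  rcases lt_trichotomy r δ with h | h | h
  · have e : (fun s : ℝ => max (s - δ) 0 ^ (p + 2)) =ᶠ[nhds r] fun _ => 0 := by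
      filter_upwards [Iio_mem_nhds h] with s hs
      rw [max_eq_right (by simp only [mem_Iio] at hs; linarith)]; simp
    rw [max_eq_right (by linarith)]
    simpa using (hasDerivAt_const r (0:ℝ)).congr_of_eventuallyEq e
  · subst h
    rw [sub_self, max_self, zero_pow (by omega), mul_zero]
    rw [hasDerivAt_iff_isLittleO]
    have h1 : (fun s : ℝ => (s - r) ^ (p + 2)) =o[nhds r] fun s => s - r := by
      have : (fun s : ℝ => (s - r) ^ (p + 2)) = fun s => (s - r) ^ (p + 1) * (s - r) := by
        ext s; ring
      rw [this]
      have h2 : (fun s : ℝ => (s - r) ^ (p + 1)) =o[nhds r] fun _ => (1:ℝ) := by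
        rw [Asymptotics.isLittleO_one_iff]
        have : Continuous fun s : ℝ => (s - r) ^ (p + 1) := by fun_prop
        simpa using this.tendsto r
      simpa using h2.mul_isBigO (Asymptotics.isBigO_refl (fun s : ℝ => s - r) (nhds r))
    refine Asymptotics.IsBigO.trans_isLittleO (Asymptotics.IsBigO.of_bound 1 ?_) h1
    refine Eventually.of_forall fun s => ?_
    simp only [sub_self, max_self, smul_zero, sub_zero, one_mul, norm_pow, Real.norm_eq_abs,
      zero_pow (show p + 2 ≠ 0 by omega)]
    refine pow_le_pow_left₀ (abs_nonneg _) ?_ _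
    rw [abs_of_nonneg (le_max_right _ _)]
    exact max_le (le_abs_self _) (abs_nonneg _)
  · have e : (fun s : ℝ => max (s - δ) 0 ^ (p + 2)) =ᶠ[nhds r] fun s => (s - δ) ^ (p + 2) := by
      filter_upwards [Ioi_mem_nhds h] with s hs
      rw [max_eq_left (by simp only [mem_Ioi] at hs; linarith)]
    rw [max_eq_left (by linarith)]
    have := (((hasDerivAt_id r).sub_const δ).fun_pow (p + 2)).congr_of_eventuallyEq e
    simpa using this

lemma contDiff_pos_pow (δ : ℝ) (p : ℕ) : ContDiff ℝ 1 (fun s : ℝ => max (s - δ) 0 ^ (p + 2)) := by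
  rw [contDiff_one_iff_deriv]
  refine ⟨fun r => (hasDerivAt_pos_pow δ r p).differentiableAt, ?_⟩
  have : deriv (fun s : ℝ => max (s - δ) 0 ^ (p + 2)) =
      fun r => (p + 2) * max (r - δ) 0 ^ (p + 1) :=
    funext fun r => (hasDerivAt_pos_pow δ r p).deriv
  rw [this]
  fun_prop

lemma integral_pd_eq_zero {n : ℕ} {F : (Fin (n + 1) → ℝ) → ℝ} (hF : ContDiff ℝ 1 F)
    (hc : HasCompactSupport F) (i : Fin (n + 1)) : ∫ x, pd i F x = 0 := by
  have h1 : Integrable (pd i F) :=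
    (continuous_pd hF i).integrable_of_hasCompactSupport (hasCompactSupport_pd hc i)
  have h2 : Integrable F := hF.continuous.integrable_of_hasCompactSupport hc
  have := integral_mul_fderiv_eq_neg_fderiv_mul_of_integrable (μ := (volume : Measure
    (Fin (n + 1) → ℝ))) (f := fun _ => (1:ℝ)) (g := F) (v := Pi.single i 1) (by simp)
    (by simp only [one_mul]; exact h1) (by simpa using h2)
    (fun _ _ => differentiableAt_const _) (fun x _ => hF.differentiable (by norm_num) x)
  simpa [pd] using this

lemma pd_comp {n : ℕ} {φ : ℝ → ℝ} {φ' : ℝ} {v : (Fin (n + 1) → ℝ) → ℝ} {x : Fin (n + 1) → ℝ}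
    (hφ : HasDerivAt φ φ' (v x)) (hv : DifferentiableAt ℝ v x) (i : Fin (n + 1)) :
    pd i (fun y => φ (v y)) x = φ' * pd i v x := by
  have : HasFDerivAt (fun y => φ (v y)) (φ' • fderiv ℝ v x) x :=
    hφ.comp_hasFDerivAt x hv.hasFDerivAt
  simp [pd, this.fderiv]

lemma pd_mul {n : ℕ} {f g : (Fin (n + 1) → ℝ) → ℝ} {x : Fin (n + 1) → ℝ}
    (hf : DifferentiableAt ℝ f x) (hg : DifferentiableAt ℝ g x) (i : Fin (n + 1)) :
    pd i (fun y => f y * g y) x = pd i f x * g x + f x * pd i g x := by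
  have := (hf.hasFDerivAt.fun_mul hg.hasFDerivAt).fderiv
  simp only [pd]
  rw [this]
  simp
  ring

lemma pd_congr_zero {n : ℕ} {f : (Fin (n + 1) → ℝ) → ℝ} {x : Fin (n + 1) → ℝ}
    (h : f =ᶠ[nhds x] fun _ => 0) (i : Fin (n + 1)) : pd i f x = 0 := by
  simp [pd, h.fderiv_eq]

/-! ### Energy inequality at a fixed time -/

/-- The truncated function `(w U - δ)₊`, for `U` continuous and vanishing off the strip, is zero
near every point off the strip. -/
lemma trunc_eventually_zero {n : ℕ} {Ω₀ : Set (Fin n → ℝ)} {U w : (Fin (n + 1) → ℝ) → ℝ} {δ : ℝ}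
    (hδ : 0 < δ) (hU : Continuous U) (hw : Continuous w) (hU0 : ∀ x ∉ strip Ω₀, U x = 0)
    {x : Fin (n + 1) → ℝ} (hx : x ∉ strip Ω₀) : ∀ᶠ y in nhds x, max (w y * U y - δ) 0 = 0 := by
  have h1 : w x * U x < δ := by rw [hU0 x hx, mul_zero]; exact hδ
  filter_upwards [(hw.fun_mul hU).continuousAt.eventually_lt continuousAt_const h1] with y hy
  exact max_eq_right (by linarith)

/-- Pointwise energy inequality for `z = (w U - δ)₊`: up to a divergence, `4 z³ w L U` is bounded by
the negative of the gradient square of `z²`, plus a small multiple of `z⁴` and an error `δ² z²`. -/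
lemma energy_pointwise {n : ℕ} {Ω₀ : Set (Fin n → ℝ)} (hΩ : IsOpen Ω₀)
    {lam Lam ε κ δ : ℝ} (hlam : 0 < lam) (hLam : 0 ≤ Lam) (hε : 0 ≤ ε) (hκ : 0 ≤ κ) (hδ : 0 < δ)
    {a : (Fin (n + 1) → ℝ) → Fin (n + 1) → Fin (n + 1) → ℝ}
    {b : (Fin (n + 1) → ℝ) → Fin (n + 1) → ℝ} {c : (Fin (n + 1) → ℝ) → ℝ}
    (hG : GoodCoeffs Ω₀ lam Lam a b c) (hb : ∀ x ∈ strip Ω₀, ∀ i, |b x i| ≤ Real.sqrt ε)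
    (hc : ∀ x ∈ strip Ω₀, c x ≤ 2 * ε)
    {U w : (Fin (n + 1) → ℝ) → ℝ} (hU2 : ContDiffOn ℝ 2 U (strip Ω₀))
    (hw : ContDiff ℝ 1 w) (hw0 : ∀ x, 0 < w x) (hwκ : ∀ x, ∑ i, |pd i w x| ≤ κ * w x)
    {x : Fin (n + 1) → ℝ} (hx : x ∈ strip Ω₀) :
    4 * max (w x * U x - δ) 0 ^ 3 * w x * Lop a b c U x ≤
      (∑ i, pd i (fun y => 4 * max (w y * U y - δ) 0 ^ 3 * w y * ∑ j, a y i j * pd j U y) x)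
      + -2 * lam * ∑ i, pd i (fun y => max (w y * U y - δ) 0 ^ 2) x ^ 2
      + (64 * κ ^ 2 * Lam ^ 2 * (n + 1 : ℕ) / lam + 2 * ε * (n + 1 : ℕ) / lam
        + 8 * (κ ^ 2 * Lam + Real.sqrt ε * κ + 2 * ε)) * max (w x * U x - δ) 0 ^ 4
      + (36 * κ ^ 2 * Lam ^ 2 * (n + 1 : ℕ) / lam + 4 * (κ ^ 2 * Lam + Real.sqrt ε * κ + 2 * ε))
        * δ ^ 2 * max (w x * U x - δ) 0 ^ 2 := by
  have hso := isOpen_strip hΩ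
  have hUx : ContDiffAt ℝ 2 U x := hU2.contDiffAt (hso.mem_nhds hx)
  have hUd : DifferentiableAt ℝ U x := hUx.differentiableAt (by norm_num)
  have hwd : DifferentiableAt ℝ w x := hw.differentiable (by norm_num) x
  have hvd : DifferentiableAt ℝ (fun y => w y * U y) x := hwd.fun_mul hUd
  have hX : ∀ i, DifferentiableAt ℝ (fun y => ∑ j, a y i j * pd j U y) x := fun i =>
    DifferentiableAt.fun_sum fun j _ =>
      (((hG.a_reg i j).contDiffAt (hso.mem_nhds hx)).differentiableAt (by norm_num)).fun_mul
        (differentiableAt_pd hUx j)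
  set z := max (w x * U x - δ) 0 with hz
  have hz0 : 0 ≤ z := le_max_right _ _
  -- the gradient of `w U` and the logarithmic gradient of `w`
  set q : Fin (n + 1) → ℝ := fun i => pd i (fun y => w y * U y) x with hq
  set ω : Fin (n + 1) → ℝ := fun i => pd i w x / w x with hω
  have hwx := hw0 x
  have hqe : ∀ i, w x * pd i U x = q i - ω i * (w x * U x) := fun i => by
    simp only [hq, hω]
    rw [pd_mul hwd hUd]
    field_simp
    ring
  have hYe : ∀ i, pd i (fun y => max (w y * U y - δ) 0 ^ 2) x = 2 * z * q i := fun i => by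
    have := pd_comp (hasDerivAt_pos_pow δ (w x * U x) 0) hvd i
    simpa using this
  have h3d : DifferentiableAt ℝ (fun y => max (w y * U y - δ) 0 ^ 3) x :=
    DifferentiableAt.comp (g := fun s : ℝ => max (s - δ) 0 ^ 3) x
      (hasDerivAt_pos_pow δ (w x * U x) 1).differentiableAt hvd
  have h3e : ∀ i, pd i (fun y => max (w y * U y - δ) 0 ^ 3) x = 3 * z ^ 2 * q i := fun i => by
    have := pd_comp (hasDerivAt_pos_pow δ (w x * U x) 1) hvd i
    norm_num at this
    exact this
  have hHe : ∀ i, pd i (fun y => 4 * max (w y * U y - δ) 0 ^ 3 * w y * ∑ j, a y i j * pd j U y) x =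
      12 * z ^ 2 * q i * (w x * ∑ j, a x i j * pd j U x)
      + 4 * z ^ 3 * ω i * (w x * ∑ j, a x i j * pd j U x)
      + 4 * z ^ 3 * w x * pd i (fun y => ∑ j, a y i j * pd j U y) x := fun i => by
    have h4d : DifferentiableAt ℝ (fun y => 4 * max (w y * U y - δ) 0 ^ 3) x := h3d.const_mul 4
    rw [pd_mul (h4d.fun_mul hwd) (hX i), pd_mul h4d hwd, pd_const_mul]
    simp only [h3e i, hω, ← hz]
    field_simp
    ring
  have hXe : ∀ i, w x * ∑ j, a x i j * pd j U x =
      ∑ j, a x i j * (q j - ω j * (w x * U x)) := fun i => by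
    rw [Finset.mul_sum]
    exact Finset.sum_congr rfl fun j _ => by rw [← hqe j]; ring
  have hbe : w x * ∑ i, b x i * pd i U x = ∑ i, b x i * (q i - ω i * (w x * U x)) := by
    rw [Finset.mul_sum]
    exact Finset.sum_congr rfl fun j _ => by rw [← hqe j]; ring
  have hωκ : ∑ i, |ω i| ≤ κ := by
    have : ∀ i, |ω i| = |pd i w x| / w x := fun i => by
      simp only [hω]; rw [abs_div, abs_of_pos hwx]
    simp only [this]
    rw [← Finset.sum_div, div_le_iff₀ hwx]
    exact hwκ x
  simp only [hYe, hHe, hXe]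
  rcases hz0.eq_or_lt with h0 | hpos
  · simp [← h0]
  have hv : w x * U x = z + δ := by
    have : z = w x * U x - δ := by
      rw [hz]; apply max_eq_left
      by_contra hneg
      rw [hz, max_eq_right (by linarith)] at hpos
      exact lt_irrefl _ hpos
    linarith
  have key := alg_ineq (Nat.succ_pos n) (a x) (b x) q ω hlam hLam hκ hε hz0 hδ.le
    (hG.elliptic x hx q) (hG.a_bdd x hx) (hb x hx) (hc x hx) hωκ
  have e1 : 4 * z ^ 3 * w x * Lop a b c U x =
      (∑ i, 4 * z ^ 3 * w x * pd i (fun y => ∑ j, a y i j * pd j U y) x)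
      + 4 * z ^ 3 * ∑ i, b x i * (q i - ω i * (z + δ)) + 4 * z ^ 3 * (c x * (z + δ)) := by
    rw [← hv, ← hbe, ← Finset.mul_sum]
    simp only [Lop]
    ring
  have e2 : ∀ x : Fin (n + 1) → ℝ, ∀ k : ℝ, ∀ a : Fin (n + 1) → Fin (n + 1) → ℝ,
      ∀ r : Fin (n + 1) → ℝ, ∑ i, k * x i * ∑ j, a i j * r j =
      k * ∑ i, ∑ j, a i j * x i * r j := by
    intro x k a r
    rw [Finset.mul_sum]
    refine Finset.sum_congr rfl fun i _ => ?_
    rw [Finset.mul_sum, Finset.mul_sum]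
    exact Finset.sum_congr rfl fun j _ => by ring
  rw [e1, hv, Finset.sum_add_distrib, Finset.sum_add_distrib, e2, e2]
  linarith

/-- Integrated energy inequality at a fixed time. The divergence integrates to zero because the
truncation at the level `δ > 0` has compact support inside the strip, and the gradient term is
bounded below by the Poincaré inequality for `z² = (w U - δ)₊²`. -/
lemma energy_slice {n : ℕ} {Ω₀ : Set (Fin n → ℝ)} (hΩ : IsOpen Ω₀)
    {lam Lam ε κ δ : ℝ} (hlam : 0 < lam) (hLam : 0 ≤ Lam) (hε : 0 ≤ ε) (hκ : 0 ≤ κ) (hδ : 0 < δ)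
    {a : (Fin (n + 1) → ℝ) → Fin (n + 1) → Fin (n + 1) → ℝ}
    {b : (Fin (n + 1) → ℝ) → Fin (n + 1) → ℝ} {c : (Fin (n + 1) → ℝ) → ℝ}
    (hG : GoodCoeffs Ω₀ lam Lam a b c) (hb : ∀ x ∈ strip Ω₀, ∀ i, |b x i| ≤ Real.sqrt ε)
    (hc : ∀ x ∈ strip Ω₀, c x ≤ 2 * ε)
    {U w : (Fin (n + 1) → ℝ) → ℝ} (hU : Continuous U) (hU0 : ∀ x ∉ strip Ω₀, U x = 0)
    (hU2 : ContDiffOn ℝ 2 U (strip Ω₀))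
    (hw : ContDiff ℝ 1 w) (hw0 : ∀ x, 0 < w x) (hwκ : ∀ x, ∑ i, |pd i w x| ≤ κ * w x)
    (hK : IsCompact {x | δ ≤ w x * U x})
    {V R : ℝ} (hV : 0 < V) (hvol : volume Ω₀ ≤ ENNReal.ofReal V) (hR : 0 < R)
    (hRn : R ^ n = 2 * V)
    (hLint : Integrable fun x => 4 * max (w x * U x - δ) 0 ^ 3 * w x * Lop a b c U x) :
    ∫ x, 4 * max (w x * U x - δ) 0 ^ 3 * w x * Lop a b c U x ≤
      (64 * κ ^ 2 * Lam ^ 2 * (n + 1 : ℕ) / lam + 2 * ε * (n + 1 : ℕ) / lam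
        + 8 * (κ ^ 2 * Lam + Real.sqrt ε * κ + 2 * ε) - 2 * lam / (16 * R ^ 2 * (n + 1)))
        * (∫ x, max (w x * U x - δ) 0 ^ 4)
      + (36 * κ ^ 2 * Lam ^ 2 * (n + 1 : ℕ) / lam + 4 * (κ ^ 2 * Lam + Real.sqrt ε * κ + 2 * ε))
        * δ ^ 2 * ∫ x, max (w x * U x - δ) 0 ^ 2 := by
  have hso := isOpen_strip hΩ
  have hcs : ∀ f : (Fin (n + 1) → ℝ) → ℝ, (∀ x, max (w x * U x - δ) 0 = 0 → f x = 0) →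
      HasCompactSupport f := fun f hf =>
    HasCompactSupport.intro hK fun x hx => hf x (max_eq_right (by
      simp only [mem_ofPred_eq, not_le] at hx; linarith))
  have hev : ∀ x ∉ strip Ω₀, ∀ᶠ y in nhds x, max (w y * U y - δ) 0 = 0 := fun x hx =>
    trunc_eventually_zero hδ hU hw.continuous hU0 hx
  set z : (Fin (n + 1) → ℝ) → ℝ := fun x => max (w x * U x - δ) 0 with hz
  have hvC : ∀ x ∈ strip Ω₀, ContDiffAt ℝ 1 (fun y => w y * U y) x := fun x hx =>
    hw.contDiffAt.mul ((hU2.contDiffAt (hso.mem_nhds hx)).of_le (by norm_num))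
  have hzp : ∀ p : ℕ, ∀ x ∈ strip Ω₀, ContDiffAt ℝ 1 (fun y => z y ^ (p + 2)) x := fun p x hx =>
    (contDiff_pos_pow δ p).contDiffAt.comp x (hvC x hx)
  -- functions vanishing with `z` are `C¹` globally as soon as they are `C¹` in the strip
  have hglob : ∀ f : (Fin (n + 1) → ℝ) → ℝ, (∀ x, z x = 0 → f x = 0) →
      (∀ x ∈ strip Ω₀, ContDiffAt ℝ 1 f x) → ContDiff ℝ 1 f := by
    intro f hf0 hf
    rw [contDiff_iff_contDiffAt]
    intro x
    by_cases hx : x ∈ strip Ω₀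
    · exact hf x hx
    · refine (contDiffAt_const (c := (0:ℝ))).congr_of_eventuallyEq ?_
      filter_upwards [hev x hx] with y hy using hf0 y hy
  set Y : (Fin (n + 1) → ℝ) → ℝ := fun y => z y ^ 2 with hY
  set H : Fin (n + 1) → (Fin (n + 1) → ℝ) → ℝ := fun i y =>
    4 * z y ^ 3 * w y * ∑ j, a y i j * pd j U y with hH
  have hY1 : ContDiff ℝ 1 Y := hglob Y (fun x hx => by simp [hY, hx]) (hzp 0)
  have hYc : HasCompactSupport Y := hcs Y fun x hx => by simp [hY, hz, hx]
  have hH1 : ∀ i, ContDiff ℝ 1 (H i) := fun i => hglob _ (fun x hx => by simp [hH, hx])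
    fun x hx => ((contDiffAt_const.mul (hzp 1 x hx)).mul hw.contDiffAt).mul
      (ContDiffAt.sum fun j _ => ((hG.a_reg i j).contDiffAt (hso.mem_nhds hx)).mul
        (contDiffAt_pd (hU2.contDiffAt (hso.mem_nhds hx)) j))
  have hHc : ∀ i, HasCompactSupport (H i) := fun i => hcs _ fun x hx => by simp [hH, hz, hx]
  have hHi : ∀ i, Integrable (pd i (H i)) := fun i =>
    (continuous_pd (hH1 i) i).integrable_of_hasCompactSupport (hasCompactSupport_pd (hHc i) i)
  have hzc : Continuous z := ((hw.continuous.mul hU).sub continuous_const).max continuous_const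
  have hzi : ∀ p : ℕ, Integrable fun x => z x ^ (p + 1) := fun p =>
    (hzc.pow _).integrable_of_hasCompactSupport (hcs _ fun x hx => by simp [hz, hx])
  set A := 64 * κ ^ 2 * Lam ^ 2 * (n + 1 : ℕ) / lam + 2 * ε * (n + 1 : ℕ) / lam
        + 8 * (κ ^ 2 * Lam + Real.sqrt ε * κ + 2 * ε) with hA
  set B := 36 * κ ^ 2 * Lam ^ 2 * (n + 1 : ℕ) / lam + 4 * (κ ^ 2 * Lam + Real.sqrt ε * κ + 2 * ε)
    with hB
  have hpt : ∀ x, 4 * z x ^ 3 * w x * Lop a b c U x ≤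
      (∑ i, pd i (H i) x) + -2 * lam * (∑ i, pd i Y x ^ 2) + A * z x ^ 4 + B * δ ^ 2 * z x ^ 2 := by
    intro x
    by_cases hx : x ∈ strip Ω₀
    · exact energy_pointwise hΩ hlam hLam hε hκ hδ hG hb hc hU2 hw hw0 hwκ hx
    · have e0 : z x = 0 := (hev x hx).self_of_nhds
      have e1 : ∀ i, pd i (H i) x = 0 := fun i => pd_congr_zero (by
        filter_upwards [hev x hx] with y hy; simp [hH, hz, hy]) i
      have e2 : ∀ i, pd i Y x = 0 := fun i => pd_congr_zero (by
        filter_upwards [hev x hx] with y hy; simp [hY, hz, hy]) i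
      simp [e0, e1, e2]
  have i1 : Integrable fun x => ∑ i, pd i (H i) x := integrable_finsetSum _ fun i _ => hHi i
  have i2 : Integrable fun x => -2 * lam * ∑ i, pd i Y x ^ 2 :=
    (integrable_pd_sq hY1 hYc).const_mul _
  have i3 : Integrable fun x => A * z x ^ 4 := (hzi 3).const_mul _
  have i4 : Integrable fun x => B * δ ^ 2 * z x ^ 2 := (hzi 1).const_mul _
  have hmono := integral_mono hLint (((i1.add i2).add i3).add i4) hpt
  have hval : ∫ x, ((∑ i, pd i (H i) x) + -2 * lam * (∑ i, pd i Y x ^ 2) + A * z x ^ 4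
      + B * δ ^ 2 * z x ^ 2) = -2 * lam * (∫ x, ∑ i, pd i Y x ^ 2) + A * (∫ x, z x ^ 4)
      + B * δ ^ 2 * ∫ x, z x ^ 2 := by
    rw [integral_add (by exact (i1.add i2).add i3) i4, integral_add (by exact i1.add i2) i3,
      integral_add i1 i2,
      integral_finsetSum _ fun i _ => hHi i]
    simp only [integral_pd_eq_zero (hH1 _) (hHc _), integral_const_mul]
    simp
  have hpoin := poincare_two hΩ.measurableSet hV hvol hR.le hRn Y hY1 hYc fun x hx => by
    have e0 : z x = 0 := (hev x hx).self_of_nhds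
    simp [hY, e0]
  have hY4 : ∀ x, Y x ^ 2 = z x ^ 4 := fun x => by simp only [hY]; ring
  simp only [hY4] at hpoin
  have hpos : 0 < 16 * R ^ 2 * ((n:ℝ) + 1) := by positivity
  have h5 : 2 * lam / (16 * R ^ 2 * (n + 1)) * (∫ x, z x ^ 4) ≤
      2 * lam * ∫ x, ∑ i, pd i Y x ^ 2 := by
    rw [div_mul_eq_mul_div, div_le_iff₀ hpos]
    nlinarith
  have h6 : ∫ x, 4 * z x ^ 3 * w x * Lop a b c U x ≤ _ := hmono.trans_eq hval
  linarith

/-! ### Exponential weight and majorant -/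

/-- The exponentially decaying weight `exp (-κ √(1 + x₀²))`. -/
def wt {n : ℕ} (κ : ℝ) (x : Fin (n + 1) → ℝ) : ℝ := Real.exp (-κ * Real.sqrt (1 + x 0 ^ 2))

lemma wt_pos {n : ℕ} (κ : ℝ) (x : Fin (n + 1) → ℝ) : 0 < wt κ x := Real.exp_pos _

lemma wt_le {n : ℕ} {κ : ℝ} (hκ : 0 ≤ κ) (x : Fin (n + 1) → ℝ) :
    wt κ x ≤ Real.exp (-κ * |x 0|) := by
  refine Real.exp_le_exp.2 (mul_le_mul_of_nonpos_left ?_ (by linarith))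
  exact Real.abs_le_sqrt (by linarith)

lemma wt_le_one {n : ℕ} {κ : ℝ} (hκ : 0 ≤ κ) (x : Fin (n + 1) → ℝ) : wt κ x ≤ 1 := by
  refine Real.exp_le_one_iff.2 ?_
  have := mul_nonneg hκ (Real.sqrt_nonneg (1 + x 0 ^ 2))
  linarith

lemma contDiff_wt {n : ℕ} (κ : ℝ) : ContDiff ℝ 1 (wt κ : (Fin (n + 1) → ℝ) → ℝ) := by
  unfold wt
  refine Real.contDiff_exp.comp (contDiff_const.mul (ContDiff.sqrt (by fun_prop) fun x => ?_))
  positivity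

lemma sum_pd_wt {n : ℕ} {κ : ℝ} (hκ : 0 ≤ κ) (x : Fin (n + 1) → ℝ) :
    ∑ i, |pd i (wt κ) x| ≤ κ * wt κ x := by
  have hr : 0 < 1 + x 0 ^ 2 := by positivity
  have hd : HasDerivAt (fun s : ℝ => Real.exp (-κ * Real.sqrt (1 + s ^ 2)))
      (Real.exp (-κ * Real.sqrt (1 + x 0 ^ 2)) * (-κ * (x 0 / Real.sqrt (1 + x 0 ^ 2)))) (x 0) := by
    have h1 : HasDerivAt (fun s : ℝ => 1 + s ^ 2) (2 * x 0) (x 0) := by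
      simpa using ((hasDerivAt_id (x 0)).fun_pow 2).const_add 1
    have h2 := h1.sqrt hr.ne'
    have h3 : 2 * x 0 / (2 * Real.sqrt (1 + x 0 ^ 2)) = x 0 / Real.sqrt (1 + x 0 ^ 2) :=
      mul_div_mul_left _ _ two_ne_zero
    rw [h3] at h2
    exact (h2.const_mul (-κ)).exp
  have h0 : DifferentiableAt ℝ (fun y : Fin (n + 1) → ℝ => y 0) x := by fun_prop
  have hp : ∀ i, pd i (fun y : Fin (n + 1) → ℝ => y 0) x = if i = 0 then 1 else 0 := fun i => by
    have : fderiv ℝ (fun y : Fin (n + 1) → ℝ => y 0) x = ContinuousLinearMap.proj 0 :=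
      (hasFDerivAt_apply (𝕜 := ℝ) (0 : Fin (n + 1)) x).fderiv
    simp [pd, this, Pi.single_apply, eq_comm]
  have he : ∀ i, pd i (wt κ) x = (Real.exp (-κ * Real.sqrt (1 + x 0 ^ 2)) *
      (-κ * (x 0 / Real.sqrt (1 + x 0 ^ 2)))) * if i = 0 then 1 else 0 := fun i => by
    rw [← hp i]
    exact pd_comp (v := fun y : Fin (n + 1) → ℝ => y 0) hd h0 i
  have hq : |x 0 / Real.sqrt (1 + x 0 ^ 2)| ≤ 1 := by
    have hs := Real.sqrt_pos.2 hr
    rw [abs_div, abs_of_pos hs, div_le_one hs]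
    exact Real.abs_le_sqrt (by linarith)
  have hsum : ∑ i, |pd i (wt κ) x| = |Real.exp (-κ * Real.sqrt (1 + x 0 ^ 2)) *
      (-κ * (x 0 / Real.sqrt (1 + x 0 ^ 2)))| := by
    rw [Finset.sum_eq_single 0]
    · rw [he]; simp
    · intro i _ hi; rw [he]; simp [hi]
    · simp
  rw [hsum, abs_mul, abs_mul, Real.abs_exp, abs_neg, abs_of_nonneg hκ]
  have : wt κ x = Real.exp (-κ * Real.sqrt (1 + x 0 ^ 2)) := rfl
  rw [this]
  have hm := mul_le_mul_of_nonneg_left hq (mul_nonneg hκ (Real.exp_pos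
    (-κ * Real.sqrt (1 + x 0 ^ 2))).le)
  linarith

lemma integrable_exp_neg_abs {k : ℝ} (hk : 0 < k) : Integrable fun s : ℝ => Real.exp (-k * |s|) := by
  rw [← integrableOn_univ, ← Iic_union_Ioi (a := (0:ℝ))]
  refine IntegrableOn.union ?_ ?_
  · refine (integrableOn_exp_mul_Iic hk 0).congr_fun (fun s hs => ?_) measurableSet_Iic
    simp only [mem_Iic] at hs
    simp [abs_of_nonpos hs]
  · refine (integrableOn_exp_mul_Ioi (neg_lt_zero.2 hk) 0).congr_fun (fun s hs => ?_)
      measurableSet_Ioi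
    simp only [mem_Ioi] at hs
    simp [abs_of_pos hs]

/-- The integrable majorant: exponential decay along the strip, zero outside. -/
def maj {n : ℕ} (Ω₀ : Set (Fin n → ℝ)) (k : ℝ) : (Fin (n + 1) → ℝ) → ℝ :=
  (strip Ω₀).indicator fun x => Real.exp (-k * |x 0|)

lemma integrable_maj {n : ℕ} {Ω₀ : Set (Fin n → ℝ)} (hΩm : MeasurableSet Ω₀)
    (hvol : volume Ω₀ < ⊤) {k : ℝ} (hk : 0 < k) : Integrable (maj Ω₀ k) := by
  have h1 : Integrable (Ω₀.indicator (fun _ => (1:ℝ))) :=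
    (integrable_indicator_iff hΩm).2 (integrableOn_const hvol.ne)
  have h2 := (integrable_exp_neg_abs hk).mul_prod h1
  have h3 := ((volume_preserving_piFinSuccAbove (fun _ : Fin (n + 1) => ℝ) 0).integrable_comp_emb
    (MeasurableEquiv.measurableEmbedding _)).2 h2
  refine h3.congr (Eventually.of_forall fun x => ?_)
  show Real.exp (-k * |x 0|) * Ω₀.indicator (fun _ => (1:ℝ)) (fun i => x i.succ) = maj Ω₀ k x
  unfold maj
  by_cases hx : (fun i : Fin n => x i.succ) ∈ Ω₀
  · rw [indicator_of_mem hx, indicator_of_mem (show x ∈ strip Ω₀ from hx), mul_one]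
  · rw [indicator_of_notMem hx, indicator_of_notMem (show x ∉ strip Ω₀ from hx), mul_zero]

/-! ### Differentiation of the truncated energy in time -/

lemma maj_nonneg {n : ℕ} (Ω₀ : Set (Fin n → ℝ)) (k : ℝ) (x : Fin (n + 1) → ℝ) : 0 ≤ maj Ω₀ k x :=
  indicator_nonneg (fun _ _ => (Real.exp_pos _).le) x

lemma maj_le_one {n : ℕ} (Ω₀ : Set (Fin n → ℝ)) {k : ℝ} (hk : 0 < k) (x : Fin (n + 1) → ℝ) :
    maj Ω₀ k x ≤ 1 := by
  refine indicator_le' (fun y _ => ?_) (fun _ _ => zero_le_one) x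
  have := mul_nonneg hk.le (abs_nonneg (y 0))
  exact Real.exp_le_one_iff.2 (by linarith)

lemma Sol.continuous_slice {n : ℕ} {Ω₀ : Set (Fin n → ℝ)}
    {a : (Fin (n + 1) → ℝ) → Fin (n + 1) → Fin (n + 1) → ℝ}
    {b : (Fin (n + 1) → ℝ) → Fin (n + 1) → ℝ} {c : (Fin (n + 1) → ℝ) → ℝ}
    {U : ℝ → (Fin (n + 1) → ℝ) → ℝ} (hU : Sol Ω₀ a b c U) {t : ℝ} (ht : t ≤ 0) :
    Continuous (U t) := by
  rw [← continuousOn_univ]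
  have : ContinuousOn (fun x : Fin (n + 1) → ℝ => (t, x)) univ := by fun_prop
  exact hU.cont.comp this fun x _ => ⟨ht, mem_univ _⟩

lemma Sol.continuousOn_time {n : ℕ} {Ω₀ : Set (Fin n → ℝ)}
    {a : (Fin (n + 1) → ℝ) → Fin (n + 1) → Fin (n + 1) → ℝ}
    {b : (Fin (n + 1) → ℝ) → Fin (n + 1) → ℝ} {c : (Fin (n + 1) → ℝ) → ℝ}
    {U : ℝ → (Fin (n + 1) → ℝ) → ℝ} (hU : Sol Ω₀ a b c U) (x : Fin (n + 1) → ℝ) :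
    ContinuousOn (fun s => U s x) (Iic 0) := by
  have : ContinuousOn (fun s : ℝ => (s, x)) (Iic 0) := by fun_prop
  exact hU.cont.comp this fun s hs => ⟨hs, mem_univ _⟩

/-- The superlevel sets of a weighted solution lie in the strip, in a ball independent of time. -/
lemma superlevel_bounded {n : ℕ} {Ω₀ : Set (Fin n → ℝ)} (hΩb : Bornology.IsBounded Ω₀)
    {w : (Fin (n + 1) → ℝ) → ℝ} {U : ℝ → (Fin (n + 1) → ℝ) → ℝ} {C k δ : ℝ}
    (hk : 0 < k) (hδ : 0 < δ) (hbd : ∀ t ≤ (0:ℝ), ∀ x, |w x * U t x| ≤ C * maj Ω₀ k x) :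
    ∃ r, ∀ t ≤ (0:ℝ), ∀ x, δ ≤ w x * U t x → x ∈ strip Ω₀ ∧ x ∈ Metric.closedBall 0 r := by
  obtain ⟨R₀, hR₀⟩ := hΩb.exists_norm_le
  refine ⟨max (C / (δ * k)) R₀, fun t ht x hx => ?_⟩
  have h1 := hx.trans ((le_abs_self _).trans (hbd t ht x))
  have hxs : x ∈ strip Ω₀ := by
    by_contra hns
    rw [maj, indicator_of_notMem hns, mul_zero] at h1
    linarith
  refine ⟨hxs, ?_⟩
  rw [maj, indicator_of_mem hxs, neg_mul, Real.exp_neg, ← div_eq_mul_inv,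
    le_div_iff₀ (Real.exp_pos _)] at h1
  have h2 : k * |x 0| ≤ Real.exp (k * |x 0|) := by linarith [Real.add_one_le_exp (k * |x 0|)]
  have h3 : |x 0| ≤ C / (δ * k) := by
    rw [le_div_iff₀ (by positivity)]
    nlinarith
  have h4 : ‖fun i : Fin n => x i.succ‖ ≤ R₀ := hR₀ _ hxs
  rw [mem_closedBall_zero_iff,
    pi_norm_le_iff_of_nonneg ((abs_nonneg _).trans (h3.trans (le_max_left _ _)))]
  intro i
  refine Fin.cases ?_ (fun j => ?_) i
  · exact h3.trans (le_max_left _ _)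
  · exact ((norm_le_pi_norm (fun i : Fin n => x i.succ) j).trans h4).trans (le_max_right _ _)

/-- The union of the superlevel sets over a compact time interval is a compact subset of the strip. -/
lemma superlevel_compact {n : ℕ} {Ω₀ : Set (Fin n → ℝ)} (hΩb : Bornology.IsBounded Ω₀)
    {a : (Fin (n + 1) → ℝ) → Fin (n + 1) → Fin (n + 1) → ℝ}
    {b : (Fin (n + 1) → ℝ) → Fin (n + 1) → ℝ} {c : (Fin (n + 1) → ℝ) → ℝ}
    {U : ℝ → (Fin (n + 1) → ℝ) → ℝ} (hU : Sol Ω₀ a b c U)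
    {w : (Fin (n + 1) → ℝ) → ℝ} (hw : Continuous w) {C k δ : ℝ}
    (hk : 0 < k) (hδ : 0 < δ) (hbd : ∀ t ≤ (0:ℝ), ∀ x, |w x * U t x| ≤ C * maj Ω₀ k x) (t : ℝ) :
    IsCompact {x | ∃ s ∈ Icc t 0, δ ≤ w x * U s x} ∧
      {x | ∃ s ∈ Icc t 0, δ ≤ w x * U s x} ⊆ strip Ω₀ := by
  obtain ⟨r, hr⟩ := superlevel_bounded hΩb hk hδ hbd
  constructor
  · have hcont : ContinuousOn (fun p : ℝ × (Fin (n + 1) → ℝ) => w p.2 * U p.1 p.2)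
        (Icc t 0 ×ˢ Metric.closedBall 0 r) :=
      ContinuousOn.mul (by fun_prop) (hU.cont.mono (prod_mono (fun s hs => hs.2) (subset_univ _)))
    have hc : IsCompact (Icc t 0 ×ˢ Metric.closedBall (0 : Fin (n + 1) → ℝ) r) :=
      isCompact_Icc.prod (isCompact_closedBall _ _)
    have h1 := (hc.of_isClosed_subset (hcont.preimage_isClosed_of_isClosed hc.isClosed
      (isClosed_Ici (a := δ))) inter_subset_left).image continuous_snd
    convert h1 using 1
    ext x
    constructor
    · rintro ⟨s, hs, hx⟩
      exact ⟨(s, x), ⟨⟨hs, (hr s hs.2 x hx).2⟩, hx⟩, rfl⟩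
    · rintro ⟨⟨s, y⟩, ⟨⟨hs, _⟩, hy⟩, rfl⟩
      exact ⟨s, hs, hy⟩
  · rintro x ⟨s, hs, hx⟩
    exact (hr s hs.2 x hx).1

lemma slice_compact {n : ℕ} {Ω₀ : Set (Fin n → ℝ)} (hΩb : Bornology.IsBounded Ω₀)
    {a : (Fin (n + 1) → ℝ) → Fin (n + 1) → Fin (n + 1) → ℝ}
    {b : (Fin (n + 1) → ℝ) → Fin (n + 1) → ℝ} {c : (Fin (n + 1) → ℝ) → ℝ}
    {U : ℝ → (Fin (n + 1) → ℝ) → ℝ} (hU : Sol Ω₀ a b c U)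
    {w : (Fin (n + 1) → ℝ) → ℝ} (hw : Continuous w) {C k δ : ℝ}
    (hk : 0 < k) (hδ : 0 < δ) (hbd : ∀ t ≤ (0:ℝ), ∀ x, |w x * U t x| ≤ C * maj Ω₀ k x)
    {t : ℝ} (ht : t ≤ 0) : IsCompact {x | δ ≤ w x * U t x} := by
  obtain ⟨r, hr⟩ := superlevel_bounded hΩb hk hδ hbd
  exact (isCompact_closedBall 0 r).of_isClosed_subset
    (isClosed_le continuous_const (hw.mul (hU.continuous_slice ht))) fun x hx => (hr t ht x hx).2

lemma trunc_pow_lipschitz {m p q δ : ℝ} (hp : |p| ≤ m) (hq : |q| ≤ m) (hδ : 0 ≤ δ) :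
    |max (p - δ) 0 ^ 4 - max (q - δ) 0 ^ 4| ≤ 4 * m ^ 3 * |p - q| := by
  have hm : 0 ≤ m := (abs_nonneg _).trans hp
  have h1 : |max (p - δ) 0 - max (q - δ) 0| ≤ |p - q| := by
    have := abs_max_sub_max_le_abs (p - δ) (q - δ) 0
    simpa using this
  have hx0 : 0 ≤ max (p - δ) 0 := le_max_right _ _
  have hy0 : 0 ≤ max (q - δ) 0 := le_max_right _ _
  have hxm : max (p - δ) 0 ≤ m := max_le (by linarith [le_abs_self p]) hm
  have hym : max (q - δ) 0 ≤ m := max_le (by linarith [le_abs_self q]) hm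
  generalize max (p - δ) 0 = x at *
  generalize max (q - δ) 0 = y at *
  have e : x ^ 4 - y ^ 4 = (x ^ 3 + x ^ 2 * y + x * y ^ 2 + y ^ 3) * (x - y) := by ring
  have hb : x ^ 3 + x ^ 2 * y + x * y ^ 2 + y ^ 3 ≤ 4 * m ^ 3 := by
    have a1 : x ^ 3 ≤ m ^ 3 := pow_le_pow_left₀ hx0 hxm 3
    have a2 : x ^ 2 * y ≤ m ^ 2 * m := mul_le_mul (pow_le_pow_left₀ hx0 hxm 2) hym hy0 (by positivity)
    have a3 : x * y ^ 2 ≤ m * m ^ 2 := mul_le_mul hxm (pow_le_pow_left₀ hy0 hym 2) (by positivity) hm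
    have a4 : y ^ 3 ≤ m ^ 3 := pow_le_pow_left₀ hy0 hym 3
    nlinarith
  rw [e, abs_mul, abs_of_nonneg (by positivity)]
  exact mul_le_mul hb h1 (abs_nonneg _) (by positivity)

/-- The truncated energy is right differentiable at negative times, and the derivative may be taken
under the integral sign. No measurability of `b` and `c` is assumed: the integrand of the derivative
is measurable as a limit of difference quotients. -/
lemma energy_hasDeriv {n : ℕ} {Ω₀ : Set (Fin n → ℝ)} (hΩ : IsOpen Ω₀)
    (hΩb : Bornology.IsBounded Ω₀) {lam Lam : ℝ} (hlam : 0 < lam)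
    {a : (Fin (n + 1) → ℝ) → Fin (n + 1) → Fin (n + 1) → ℝ}
    {b : (Fin (n + 1) → ℝ) → Fin (n + 1) → ℝ} {c : (Fin (n + 1) → ℝ) → ℝ}
    (hG : GoodCoeffs Ω₀ lam Lam a b c)
    {U : ℝ → (Fin (n + 1) → ℝ) → ℝ} (hU : Sol Ω₀ a b c U)
    {w : (Fin (n + 1) → ℝ) → ℝ} (hw : Continuous w) (hw0 : ∀ x, 0 < w x) (hw1 : ∀ x, w x ≤ 1)
    {C k δ : ℝ} (hC : 0 ≤ C) (hk : 0 < k) (hδ : 0 < δ)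
    (hbd : ∀ t ≤ (0:ℝ), ∀ x, |w x * U t x| ≤ C * maj Ω₀ k x) {t : ℝ} (ht : t < 0) :
    (Integrable fun x => 4 * max (w x * U t x - δ) 0 ^ 3 * w x * Lop a b c (U t) x) ∧
    Tendsto (slope (fun s => ∫ x, max (w x * U s x - δ) 0 ^ 4) t) (nhdsWithin t (Ioi t))
      (nhds (∫ x, 4 * max (w x * U t x - δ) 0 ^ 3 * w x * Lop a b c (U t) x)) := by
  obtain ⟨hK, hKs⟩ := superlevel_compact hΩb hU hw hk hδ hbd t
  set K := {x | ∃ s ∈ Icc t 0, δ ≤ w x * U s x} with hKdef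
  obtain ⟨M, hM0, hM⟩ := forward_lipschitz hΩ hlam hG hU hK hKs ht.le
  have hbd1 : ∀ s ≤ (0:ℝ), ∀ x, |w x * U s x| ≤ C := fun s hs x =>
    (hbd s hs x).trans (mul_le_of_le_one_right hC (maj_le_one Ω₀ hk x))
  set Z : ℝ → (Fin (n + 1) → ℝ) → ℝ := fun s x => max (w x * U s x - δ) 0 ^ 4 with hZ
  have hZ0 : ∀ s ∈ Icc t 0, ∀ x ∉ K, Z s x = 0 := fun s hs x hx => by
    have : w x * U s x < δ := by
      by_contra! h
      exact hx ⟨s, hs, h⟩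
    simp only [hZ]
    rw [max_eq_right (by linarith)]; norm_num
  have hZc : ∀ s ≤ (0:ℝ), Continuous (Z s) := fun s hs =>
    (((hw.mul (hU.continuous_slice hs)).sub continuous_const).max continuous_const).pow 4
  have hZi : ∀ s ∈ Icc t 0, Integrable (Z s) := fun s hs =>
    (hZc s hs.2).integrable_of_hasCompactSupport (HasCompactSupport.intro hK (hZ0 s hs))
  set bound : (Fin (n + 1) → ℝ) → ℝ := K.indicator fun _ => 4 * C ^ 3 * M with hbound
  have hbi : Integrable bound :=
    (integrable_indicator_iff hK.measurableSet).2 (integrableOn_const hK.measure_lt_top.ne)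
  have hmem : Ioo t 0 ∈ nhdsWithin t (Ioi t) := Ioo_mem_nhdsGT ht
  have hle : ∀ s ∈ Ioo t 0, ∀ x, ‖slope (fun s => Z s x) t s‖ ≤ bound x := by
    intro s hs x
    have hst : 0 < s - t := sub_pos.2 hs.1
    by_cases hx : x ∈ K
    · rw [hbound, indicator_of_mem hx, slope_def_field, Real.norm_eq_abs, abs_div, abs_of_pos hst,
        div_le_iff₀ hst]
      refine (trunc_pow_lipschitz (hbd1 s hs.2.le x) (hbd1 t ht.le x) hδ.le).trans ?_
      have h1 : |w x * U s x - w x * U t x| ≤ M * (s - t) := by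
        rw [← mul_sub, abs_mul, abs_of_pos (hw0 x)]
        exact (mul_le_of_le_one_left (abs_nonneg _) (hw1 x)).trans
          (hM s ⟨hs.1.le, hs.2.le⟩ x hx)
      rw [mul_assoc (4 * C ^ 3)]
      exact mul_le_mul_of_nonneg_left h1 (by positivity)
    · rw [hbound, indicator_of_notMem hx, slope_def_field, hZ0 s ⟨hs.1.le, hs.2.le⟩ x hx,
        hZ0 t ⟨le_rfl, ht.le⟩ x hx]
      simp
  set G : (Fin (n + 1) → ℝ) → ℝ :=
    fun x => 4 * max (w x * U t x - δ) 0 ^ 3 * w x * Lop a b c (U t) x with hGdef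
  have hlim : ∀ x, Tendsto (fun s => slope (fun s => Z s x) t s) (nhdsWithin t (Ioi t))
      (nhds (G x)) := by
    intro x
    suffices h : HasDerivWithinAt (fun s => Z s x) (G x) (Ioi t) t by
      rwa [hasDerivWithinAt_iff_tendsto_slope' (by simp)] at h
    by_cases hx : x ∈ strip Ω₀
    · have h1 : HasDerivAt (fun s => U s x) (Lop a b c (U t) x) t :=
        (hU.pde t ht.le x hx).hasDerivAt (Iic_mem_nhds ht)
      have h2 := (hasDerivAt_pos_pow δ (w x * U t x) 2).comp t (h1.const_mul (w x))
      refine HasDerivAt.hasDerivWithinAt ?_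
      have e : G x = ((2:ℕ) + 2) * max (w x * U t x - δ) 0 ^ (2 + 1) *
          (w x * Lop a b c (U t) x) := by
        simp only [hGdef]
        norm_num
        ring
      rw [e]
      exact h2
    · have hv : ∀ s ≤ (0:ℝ), w x * U s x = 0 := fun s hs => by simp [hU.zero s hs x hx]
      have e : ∀ s ≤ (0:ℝ), Z s x = 0 := fun s hs => by
        simp only [hZ]; rw [hv s hs, max_eq_right (by linarith)]; norm_num
      have e2 : G x = 0 := by
        simp only [hGdef]; rw [hv t ht.le, max_eq_right (by linarith)]; norm_num
      rw [e2]
      refine ((hasDerivAt_const t (0:ℝ)).congr_of_eventuallyEq ?_).hasDerivWithinAt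
      filter_upwards [Iic_mem_nhds ht] with s hs using e s hs
  have hmeas : ∀ s ∈ Ioo t 0, AEStronglyMeasurable (fun x => slope (fun s => Z s x) t s)
      volume := by
    intro s hs
    have : Continuous (fun x => slope (fun s => Z s x) t s) := by
      simp only [slope_def_field]
      exact ((hZc s hs.2.le).sub (hZc t ht.le)).div_const _
    exact this.aestronglyMeasurable
  have hGle : ∀ x, ‖G x‖ ≤ bound x := fun x =>
    le_of_tendsto (hlim x).norm (by filter_upwards [hmem] with s hs using hle s hs x)
  have hGm : AEStronglyMeasurable G volume := by
    obtain ⟨σ, hσ⟩ := exists_seq_tendsto (nhdsWithin t (Ioi t))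
    obtain ⟨N, hN⟩ := eventually_atTop.1 (hσ.eventually hmem)
    have hσ' : Tendsto (fun m => σ (m + N)) atTop (nhdsWithin t (Ioi t)) :=
      hσ.comp (tendsto_add_atTop_nat N)
    exact aestronglyMeasurable_of_tendsto_ae atTop
      (fun m => hmeas (σ (m + N)) (hN _ (by omega)))
      (Eventually.of_forall fun x => (hlim x).comp hσ')
  refine ⟨hbi.mono' hGm (Eventually.of_forall hGle), ?_⟩
  have hdc := tendsto_integral_filter_of_dominated_convergence (μ := volume)
    (l := nhdsWithin t (Ioi t)) (F := fun s x => slope (fun s => Z s x) t s) (f := G) bound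
    (by filter_upwards [hmem] with s hs using hmeas s hs)
    (by filter_upwards [hmem] with s hs using Eventually.of_forall (hle s hs)) hbi
    (Eventually.of_forall hlim)
  refine hdc.congr' ?_
  filter_upwards [hmem] with s hs
  simp only [slope_def_field]
  rw [integral_div, integral_sub (hZi s ⟨hs.1.le, hs.2.le⟩) (hZi t ⟨le_rfl, ht.le⟩)]

/-! ### Grönwall on the whole past and nonpositivity -/

/-- Grönwall's inequality on the whole past: a function on `(-∞, 0]` that is bounded above and
satisfies `f' ≤ -γ f + E` for its right derivative is bounded by `E / γ`. -/
lemma ancient_gronwall {f f' : ℝ → ℝ} {γ E C : ℝ} (hγ : 0 < γ) (hE : 0 ≤ E)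
    (hc : ContinuousOn f (Iic 0)) (hb : ∀ t ≤ 0, f t ≤ C)
    (hd : ∀ t < 0, Tendsto (slope f t) (nhdsWithin t (Ioi t)) (nhds (f' t)))
    (hle : ∀ t < 0, f' t ≤ -γ * f t + E) {t : ℝ} (ht : t ≤ 0) : f t ≤ E / γ := by
  have key : ∀ T : ℝ, 0 ≤ T → f t ≤ C * Real.exp (-γ * T) + E / γ := by
    intro T hT
    have h := le_gronwallBound_of_liminf_deriv_right_le (f := f) (f' := f') (δ := C) (K := -γ)
      (ε := E) (a := t - T) (b := t) (hc.mono fun s hs => hs.2.trans ht) (fun x hx r hr => by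
        have h1 := (hd x (hx.2.trans_le ht)).eventually (gt_mem_nhds hr)
        refine (h1.mono fun s hs => ?_).frequently
        rwa [slope_def_field, div_eq_inv_mul] at hs)
      (hb _ (by linarith)) (fun x hx => hle x (hx.2.trans_le ht)) t ⟨by linarith, le_rfl⟩
    rw [gronwallBound_of_K_ne_0 (by linarith)] at h
    have e : t - (t - T) = T := by ring
    rw [e] at h
    have h2 : E / -γ * (Real.exp (-γ * T) - 1) ≤ E / γ := by
      have : E / -γ * (Real.exp (-γ * T) - 1) = E / γ - E / γ * Real.exp (-γ * T) := by
        rw [div_neg]; ring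
      rw [this]
      have : 0 ≤ E / γ * Real.exp (-γ * T) := by positivity
      linarith
    linarith
  have hlim : Tendsto (fun T : ℝ => C * Real.exp (-γ * T) + E / γ) atTop
      (nhds (C * 0 + E / γ)) := by
    refine Tendsto.add_const _ (Tendsto.const_mul _ (Real.tendsto_exp_atBot.comp ?_))
    exact tendsto_id.const_mul_atTop_of_neg (by linarith)
  rw [mul_zero, zero_add] at hlim
  exact ge_of_tendsto hlim (by filter_upwards [eventually_ge_atTop 0] with T hT using key T hT)

/-- Ancient solutions of subexponential growth in the unbounded direction, uniformly in time, are
nonpositive, provided `b` and the positive part of `c` are small compared with the Poincaré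
constant. -/
lemma core {n : ℕ} {Ω₀ : Set (Fin n → ℝ)} (hΩ : IsOpen Ω₀) (hΩb : Bornology.IsBounded Ω₀)
    {lam Lam ε : ℝ} (hlam : 0 < lam) (hLam : 0 ≤ Lam) (hε : 0 ≤ ε)
    {a : (Fin (n + 1) → ℝ) → Fin (n + 1) → Fin (n + 1) → ℝ}
    {b : (Fin (n + 1) → ℝ) → Fin (n + 1) → ℝ} {c : (Fin (n + 1) → ℝ) → ℝ}
    (hG : GoodCoeffs Ω₀ lam Lam a b c) (hb : ∀ x ∈ strip Ω₀, ∀ i, |b x i| ≤ Real.sqrt ε)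
    (hc : ∀ x ∈ strip Ω₀, c x ≤ 2 * ε)
    {V R : ℝ} (hV : 0 < V) (hvol : volume Ω₀ ≤ ENNReal.ofReal V) (hR : 0 < R)
    (hRn : R ^ n = 2 * V)
    (hεP : 2 * ε * (n + 1 : ℕ) / lam + 16 * ε ≤ 2 * lam / (16 * R ^ 2 * (n + 1)) / 4)
    {U : ℝ → (Fin (n + 1) → ℝ) → ℝ} (hU : Sol Ω₀ a b c U)
    (hgrow : ∀ k > (0:ℝ), ∃ C, ∀ t ≤ (0:ℝ), ∀ x ∈ strip Ω₀, |U t x| ≤ C * Real.exp (k * |x 0|))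
    {t : ℝ} (ht : t ≤ 0) (x : Fin (n + 1) → ℝ) : U t x ≤ 0 := by
  set P := 2 * lam / (16 * R ^ 2 * (n + 1)) with hP
  have hPp : 0 < P := by positivity
  set D := 64 * Lam ^ 2 * (n + 1 : ℕ) / lam + 8 * Lam + 8 * Real.sqrt ε with hD
  have hD0 : 0 ≤ D := by positivity
  -- the decay rate of the weight, small enough for its gradient terms to be absorbed
  obtain ⟨κ, hκ0, hκ1, hκD⟩ : ∃ κ > 0, κ ≤ 1 ∧ κ * D ≤ P / 4 := by
    refine ⟨min 1 (P / 4 / (D + 1)), by positivity, min_le_left _ _, ?_⟩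
    calc min 1 (P / 4 / (D + 1)) * D ≤ P / 4 / (D + 1) * (D + 1) :=
          mul_le_mul (min_le_right _ _) (by linarith) hD0 (by positivity)
      _ = P / 4 := by field_simp
  obtain ⟨C₀, hC₀⟩ := hgrow (κ / 2) (by positivity)
  set C := max C₀ 0 with hCdef
  have hC : 0 ≤ C := le_max_right _ _
  set k := κ / 2 with hkdef
  have hk : 0 < k := by positivity
  set w : (Fin (n + 1) → ℝ) → ℝ := wt κ with hwdef
  have hw := contDiff_wt (n := n) κ
  have hw0 : ∀ x, 0 < w x := wt_pos κ
  have hbd : ∀ t ≤ (0:ℝ), ∀ x, |w x * U t x| ≤ C * maj Ω₀ k x := by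
    intro t ht x
    by_cases hx : x ∈ strip Ω₀
    · rw [maj, indicator_of_mem hx, abs_mul, abs_of_pos (hw0 x)]
      calc w x * |U t x| ≤ Real.exp (-κ * |x 0|) * (C * Real.exp (k * |x 0|)) :=
            mul_le_mul (wt_le hκ0.le x) ((hC₀ t ht x hx).trans
              (mul_le_mul_of_nonneg_right (le_max_left _ _) (Real.exp_pos _).le))
              (abs_nonneg _) (Real.exp_pos _).le
        _ = C * Real.exp (-k * |x 0|) := by
            rw [mul_left_comm, ← Real.exp_add]
            congr 2
            rw [hkdef]; ring
    · simp [hU.zero t ht x hx, maj, hx]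
  have hfin : volume Ω₀ < ⊤ := hvol.trans_lt ENNReal.ofReal_lt_top
  have hmi := integrable_maj hΩ.measurableSet hfin hk
  -- pointwise and integral bounds for powers of the truncation, uniform in time and level
  have hzle : ∀ δ > (0:ℝ), ∀ t ≤ (0:ℝ), ∀ x, ∀ p : ℕ,
      max (w x * U t x - δ) 0 ^ (p + 1) ≤ C ^ (p + 1) * maj Ω₀ k x := by
    intro δ hδ t ht x p
    have h1 : max (w x * U t x - δ) 0 ≤ C * maj Ω₀ k x :=
      max_le (by linarith [(le_abs_self _).trans (hbd t ht x)])
        (mul_nonneg hC (maj_nonneg _ _ _))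
    calc max (w x * U t x - δ) 0 ^ (p + 1) ≤ (C * maj Ω₀ k x) ^ (p + 1) :=
          pow_le_pow_left₀ (le_max_right _ _) h1 _
      _ = C ^ (p + 1) * maj Ω₀ k x ^ (p + 1) := mul_pow _ _ _
      _ ≤ C ^ (p + 1) * maj Ω₀ k x := by
          refine mul_le_mul_of_nonneg_left ?_ (by positivity)
          rw [pow_succ]
          exact mul_le_of_le_one_left (maj_nonneg _ _ _)
            (pow_le_one₀ (maj_nonneg _ _ _) (maj_le_one _ hk _))
  have hzc : ∀ δ : ℝ, ∀ t ≤ (0:ℝ), Continuous fun x => max (w x * U t x - δ) 0 := fun δ t ht =>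
    ((hw.continuous.mul (hU.continuous_slice ht)).sub continuous_const).max continuous_const
  have hzi : ∀ δ > (0:ℝ), ∀ t ≤ (0:ℝ), ∀ p : ℕ,
      Integrable fun x => max (w x * U t x - δ) 0 ^ (p + 1) := fun δ hδ t ht p => by
    refine (hmi.const_mul (C ^ (p + 1))).mono' ((hzc δ t ht).pow _).aestronglyMeasurable
      (Eventually.of_forall fun x => ?_)
    rw [Real.norm_eq_abs, abs_of_nonneg (pow_nonneg (le_max_right _ _) _)]
    exact hzle δ hδ t ht x p
  set J := ∫ x, maj Ω₀ k x with hJ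
  have hJ0 : 0 ≤ J := integral_nonneg fun x => maj_nonneg _ _ _
  have hzint : ∀ δ > (0:ℝ), ∀ t ≤ (0:ℝ), ∀ p : ℕ,
      ∫ x, max (w x * U t x - δ) 0 ^ (p + 1) ≤ C ^ (p + 1) * J := fun δ hδ t ht p => by
    rw [hJ, ← integral_const_mul]
    exact integral_mono (hzi δ hδ t ht p) (hmi.const_mul _) fun x => hzle δ hδ t ht x p
  set B := 36 * κ ^ 2 * Lam ^ 2 * (n + 1 : ℕ) / lam + 4 * (κ ^ 2 * Lam + Real.sqrt ε * κ + 2 * ε)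
    with hB
  have hB0 : 0 ≤ B := by positivity
  have hA : 64 * κ ^ 2 * Lam ^ 2 * (n + 1 : ℕ) / lam + 2 * ε * (n + 1 : ℕ) / lam
        + 8 * (κ ^ 2 * Lam + Real.sqrt ε * κ + 2 * ε) - P ≤ -(P / 2) := by
    have h1 : κ ^ 2 ≤ κ := by nlinarith
    have h2 : 64 * κ ^ 2 * Lam ^ 2 * (n + 1 : ℕ) / lam = κ ^ 2 * (64 * Lam ^ 2 * (n + 1 : ℕ) / lam) := by
      ring
    have h3 := mul_le_mul_of_nonneg_right h1
      (show 0 ≤ 64 * Lam ^ 2 * (n + 1 : ℕ) / lam by positivity)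
    have h4 := mul_le_mul_of_nonneg_right h1 hLam
    rw [h2]
    rw [hD] at hκD
    nlinarith
  -- Grönwall over the whole past leaves only the error term, which is of order `δ²`
  have henergy : ∀ δ > (0:ℝ), ∀ t ≤ (0:ℝ),
      ∫ x, max (w x * U t x - δ) 0 ^ 4 ≤ B * δ ^ 2 * (C ^ 2 * J) / (P / 2) := by
    intro δ hδ t ht
    refine ancient_gronwall (f := fun t => ∫ x, max (w x * U t x - δ) 0 ^ 4)
      (f' := fun t => ∫ x, 4 * max (w x * U t x - δ) 0 ^ 3 * w x * Lop a b c (U t) x)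
      (C := C ^ 4 * J) (by positivity) (by positivity) ?_ (fun t ht => hzint δ hδ t ht 3)
      (fun t ht => (energy_hasDeriv hΩ hΩb hlam hG hU hw.continuous hw0 (wt_le_one hκ0.le) hC hk hδ
        hbd ht).2) (fun t ht => ?_) ht
    · refine continuousOn_of_dominated (bound := fun x => C ^ 4 * maj Ω₀ k x)
        (fun t ht => ((hzc δ t ht).pow 4).aestronglyMeasurable)
        (fun t ht => Eventually.of_forall fun x => ?_) (hmi.const_mul _)
        (Eventually.of_forall fun x => ?_)
      · rw [Real.norm_eq_abs, abs_of_nonneg (pow_nonneg (le_max_right _ _) _)]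
        exact hzle δ hδ t ht x 3
      · exact (((continuousOn_const.mul (hU.continuousOn_time x)).sub continuousOn_const).sup
          continuousOn_const).pow 4
    · have h1 := energy_slice hΩ hlam hLam hε hκ0.le hδ hG hb hc (hU.continuous_slice ht.le)
        (hU.zero t ht.le) (hU.reg t ht.le) hw hw0 (sum_pd_wt hκ0.le)
        (slice_compact hΩb hU hw.continuous hk hδ hbd ht.le) hV hvol hR hRn
        (energy_hasDeriv hΩ hΩb hlam hG hU hw.continuous hw0 (wt_le_one hκ0.le) hC hk hδ hbd ht).1
      have h2 : 0 ≤ ∫ x, max (w x * U t x - δ) 0 ^ 4 :=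
        integral_nonneg fun x => pow_nonneg (le_max_right _ _) _
      have h3 := mul_le_mul_of_nonneg_right hA h2
      have h4 := mul_le_mul_of_nonneg_left (hzint δ hδ t ht.le 1)
        (show 0 ≤ B * δ ^ 2 by positivity)
      exact h1.trans (add_le_add h3 h4)
  -- at a positive value of `U` the energy stays bounded below as `δ → 0`
  by_contra! hpos
  set δ₀ := w x * U t x / 2 with hδ₀
  have hv := mul_pos (hw0 x) hpos
  have hδ₀p : 0 < δ₀ := by positivity
  have hlow : 0 < ∫ y, max (w y * U t y - δ₀) 0 ^ 4 := by
    refine integral_pos_of_integrable_nonneg_nonzero (x := x) ((hzc δ₀ t ht).pow 4)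
      (hzi δ₀ hδ₀p t ht 3) (fun y => pow_nonneg (le_max_right _ _) _) ?_
    have : 0 < max (w x * U t x - δ₀) 0 := lt_max_of_lt_left (by rw [hδ₀]; linarith)
    positivity
  have hall : ∀ δ ∈ Ioo 0 δ₀, ∫ y, max (w y * U t y - δ₀) 0 ^ 4 ≤
      B * δ ^ 2 * (C ^ 2 * J) / (P / 2) := fun δ hδ =>
    (integral_mono (hzi δ₀ hδ₀p t ht 3) (hzi δ hδ.1 t ht 3) fun y =>
      pow_le_pow_left₀ (le_max_right _ _) (max_le_max_right _ (by linarith [hδ.2])) 4).trans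
      (henergy δ hδ.1 t ht)
  have hlim : Tendsto (fun δ : ℝ => B * δ ^ 2 * (C ^ 2 * J) / (P / 2)) (nhdsWithin 0 (Ioi 0))
      (nhds 0) := by
    have hcont : Continuous fun δ : ℝ => B * δ ^ 2 * (C ^ 2 * J) / (P / 2) := by fun_prop
    have := hcont.tendsto 0
    simp only [ne_eq, OfNat.ofNat_ne_zero, not_false_eq_true, zero_pow, mul_zero, zero_mul,
      zero_div] at this
    exact this.mono_left nhdsWithin_le_nhds
  have := ge_of_tendsto hlim (by filter_upwards [Ioo_mem_nhdsGT hδ₀p] with δ hδ using hall δ hδ)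
  linarith

/-! ### Reduction of polynomial growth to uniform subexponential growth -/

/-- The euclidean norm on the strip is comparable to `|x₀|`. -/
lemma strip_norm_le {n : ℕ} {Ω₀ : Set (Fin n → ℝ)} (hΩb : Bornology.IsBounded Ω₀) :
    ∃ M, ∀ x ∈ strip Ω₀, Real.sqrt (∑ i, x i ^ 2) ≤ |x 0| + M := by
  obtain ⟨r, hr⟩ := hΩb.exists_norm_le
  refine ⟨Real.sqrt (n * r ^ 2), fun x hx => ?_⟩
  have hle : ∑ i, x i ^ 2 ≤ |x 0| ^ 2 + n * r ^ 2 := by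
    rw [Fin.sum_univ_succ, sq_abs]
    have : ∑ i : Fin n, x i.succ ^ 2 ≤ ∑ _i : Fin n, r ^ 2 := by
      refine Finset.sum_le_sum fun i _ => ?_
      have h1 := (norm_le_pi_norm (fun i : Fin n => x i.succ) i).trans (hr _ hx)
      rw [Real.norm_eq_abs] at h1
      exact sq_le_sq' (by linarith [neg_abs_le (x i.succ)]) (by linarith [le_abs_self (x i.succ)])
    simpa using this
  have h2 : 0 ≤ (n : ℝ) * r ^ 2 := by positivity
  rw [Real.sqrt_le_left (by positivity)]
  nlinarith [Real.sq_sqrt h2, Real.sqrt_nonneg (n * r ^ 2), abs_nonneg (x 0),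
    mul_nonneg (abs_nonneg (x 0)) (Real.sqrt_nonneg (n * r ^ 2))]

/-- After multiplication by `exp (θ t)`, polynomial growth becomes arbitrarily slow exponential
growth in `x₀`, uniformly in `t ≤ 0`. -/
lemma shifted_growth {n : ℕ} {Ω₀ : Set (Fin n → ℝ)} (hΩb : Bornology.IsBounded Ω₀)
    {θ d C : ℝ} (hθ : 0 < θ) (hd : 0 < d) (hC : 0 < C) {u : ℝ → (Fin (n + 1) → ℝ) → ℝ}
    (hu : ∀ t ≤ (0 : ℝ), ∀ x ∈ strip Ω₀,
      |u t x| ≤ C * (Real.sqrt (∑ i, x i ^ 2) + Real.sqrt |t| + 1) ^ d) {k : ℝ} (hk : 0 < k) :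
    ∃ K, ∀ t ≤ (0 : ℝ), ∀ x ∈ strip Ω₀,
      |Real.exp (θ * t) * u t x| ≤ K * Real.exp (k * |x 0|) := by
  obtain ⟨M, hM⟩ := strip_norm_le hΩb
  set κ := min k θ with hκdef
  have hκ : 0 < κ := lt_min hk hθ
  have hκk : κ ≤ k := min_le_left _ _
  have hκθ : κ ≤ θ := min_le_right _ _
  refine ⟨C * Real.exp (κ * M + 2 * κ + d * (-1 - Real.log (κ / d))), fun t ht x hx => ?_⟩
  set y := Real.sqrt (∑ i, x i ^ 2) + Real.sqrt |t| + 1 with hy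
  have hypos : 0 < y := by positivity
  have hyd : y ^ d ≤ Real.exp (κ * y + d * (-1 - Real.log (κ / d))) := by
    rw [Real.rpow_def_of_pos hypos, Real.exp_le_exp]
    have h1 := Real.log_le_sub_one_of_pos (x := κ / d * y) (by positivity)
    rw [Real.log_mul (by positivity) hypos.ne'] at h1
    have h2 : d * (κ / d * y) = κ * y := by field_simp
    nlinarith
  have hsqrt : Real.sqrt |t| ≤ 1 + |t| := by
    rw [Real.sqrt_le_left (by positivity)]
    nlinarith [abs_nonneg t]
  have hexp : θ * t + (κ * y + d * (-1 - Real.log (κ / d))) ≤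
      (κ * M + 2 * κ + d * (-1 - Real.log (κ / d))) + k * |x 0| := by
    have h3 : κ * y ≤ κ * (|x 0| + M + (1 + |t|) + 1) :=
      mul_le_mul_of_nonneg_left (by linarith [hM x hx]) hκ.le
    rw [abs_of_nonpos ht] at h3
    nlinarith [mul_le_mul_of_nonneg_right hκk (abs_nonneg (x 0)),
      mul_le_mul_of_nonneg_right hκθ (neg_nonneg.2 ht)]
  calc |Real.exp (θ * t) * u t x| = Real.exp (θ * t) * |u t x| := by
        rw [abs_mul, abs_of_pos (Real.exp_pos _)]
    _ ≤ Real.exp (θ * t) * (C * Real.exp (κ * y + d * (-1 - Real.log (κ / d)))) := by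
        gcongr
        exact (hu t ht x hx).trans (mul_le_mul_of_nonneg_left hyd hC.le)
    _ = C * Real.exp (θ * t + (κ * y + d * (-1 - Real.log (κ / d)))) := by
        rw [Real.exp_add (θ * t)]; ring
    _ ≤ C * Real.exp ((κ * M + 2 * κ + d * (-1 - Real.log (κ / d))) + k * |x 0|) := by
        gcongr
    _ = _ := by rw [Real.exp_add]; ring

lemma pd_congr {n : ℕ} {f g : (Fin (n + 1) → ℝ) → ℝ} {x : Fin (n + 1) → ℝ}
    (h : f =ᶠ[nhds x] g) (i : Fin (n + 1)) : pd i f x = pd i g x := by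
  simp only [pd, h.fderiv_eq]

lemma Lop_congr {n : ℕ} {a : (Fin (n + 1) → ℝ) → Fin (n + 1) → Fin (n + 1) → ℝ}
    {b : (Fin (n + 1) → ℝ) → Fin (n + 1) → ℝ} {c : (Fin (n + 1) → ℝ) → ℝ}
    {f g : (Fin (n + 1) → ℝ) → ℝ} {x : Fin (n + 1) → ℝ} (h : f =ᶠ[nhds x] g) :
    Lop a b c f x = Lop a b c g x := by
  have h1 : ∀ i, pd i (fun y => ∑ j, a y i j * pd j f y) x =
      pd i (fun y => ∑ j, a y i j * pd j g y) x := fun i => by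
    refine pd_congr ?_ i
    filter_upwards [h.eventuallyEq_nhds] with y hy
    simp only [pd_congr hy]
  simp only [Lop, h1, pd_congr h, h.eq_of_nhds]

/-- Multiplying by `exp (θ t)` adds `θ` to the zeroth-order coefficient; the Dirichlet condition
makes the extension by zero continuous. -/
lemma IsAncientSolution.shift {n : ℕ} {Ω₀ : Set (Fin n → ℝ)} (hΩ : IsOpen Ω₀)
    {a : (Fin (n + 1) → ℝ) → Fin (n + 1) → Fin (n + 1) → ℝ}
    {b : (Fin (n + 1) → ℝ) → Fin (n + 1) → ℝ} {c : (Fin (n + 1) → ℝ) → ℝ}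
    {u : ℝ → (Fin (n + 1) → ℝ) → ℝ} (hu : IsAncientSolution Ω₀ a b c u) (θ : ℝ) :
    Sol Ω₀ a b (fun x => c x + θ)
      (fun t => (strip Ω₀).indicator fun x => Real.exp (θ * t) * u t x) where
  cont := by
    have hop := isOpen_strip hΩ
    have hcl : ContinuousOn (fun p : ℝ × (Fin (n + 1) → ℝ) => Real.exp (θ * p.1) * u p.1 p.2)
        (Iic (0 : ℝ) ×ˢ closure (strip Ω₀)) :=
      ContinuousOn.mul (by fun_prop) hu.cont
    have heq : EqOn (fun p : ℝ × (Fin (n + 1) → ℝ) =>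
        (strip Ω₀).indicator (fun x => Real.exp (θ * p.1) * u p.1 x) p.2)
        (fun p => Real.exp (θ * p.1) * u p.1 p.2) (Iic (0 : ℝ) ×ˢ closure (strip Ω₀)) := by
      rintro ⟨t, x⟩ ⟨ht, hx⟩
      by_cases hxs : x ∈ strip Ω₀
      · simp [hxs]
      · have : x ∈ frontier (strip Ω₀) := by
          rw [hop.frontier_eq]; exact ⟨hx, hxs⟩
        simp [hxs, hu.bdry t ht x this]
    have hco : ContinuousOn (fun p : ℝ × (Fin (n + 1) → ℝ) =>
        (strip Ω₀).indicator (fun x => Real.exp (θ * p.1) * u p.1 x) p.2)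
        (Iic (0 : ℝ) ×ˢ (strip Ω₀)ᶜ) := by
      refine (continuousOn_const (c := (0 : ℝ))).congr ?_
      rintro ⟨t, x⟩ ⟨-, hx⟩
      exact indicator_of_notMem hx _
    -- the closed strip and the closed complement cover the space
    have hun : Iic (0 : ℝ) ×ˢ (univ : Set (Fin (n + 1) → ℝ)) =
        Iic (0 : ℝ) ×ˢ closure (strip Ω₀) ∪ Iic (0 : ℝ) ×ˢ (strip Ω₀)ᶜ := by
      rw [← prod_union, eq_univ_of_subset (union_subset_union_left _ subset_closure)
        (union_compl_self _)]
    rw [hun]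
    exact (hcl.congr heq).union_of_isClosed hco (isClosed_Iic.prod isClosed_closure)
      (isClosed_Iic.prod hop.isClosed_compl)
  zero := fun t _ x hx => indicator_of_notMem hx _
  reg := fun t ht => ((contDiffOn_const (c := Real.exp (θ * t))).mul (hu.space_reg t ht)).congr
    fun x hx => indicator_of_mem hx _
  pde := fun t ht x hx => by
    have hev : (strip Ω₀).indicator (fun x => Real.exp (θ * t) * u t x) =ᶠ[nhds x]
        fun x => Real.exp (θ * t) * u t x := by
      filter_upwards [(isOpen_strip hΩ).mem_nhds hx] with y hy
      exact indicator_of_mem hy _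
    rw [Lop_congr hev, Lop_const_mul]
    refine HasDerivWithinAt.congr (f := fun s => Real.exp (θ * s) * u s x) ?_
      (fun s _ => indicator_of_mem hx _) (indicator_of_mem hx _)
    have h1 : HasDerivWithinAt (fun s => Real.exp (θ * s)) (Real.exp (θ * t) * (θ * 1))
        (Iic (0 : ℝ)) t := ((hasDerivAt_id t).const_mul θ).exp.hasDerivWithinAt
    refine (h1.mul (hu.pde t ht x hx)).congr_deriv ?_
    simp only [Lop]; ring

/-- Theorem 1 of the paper: every polynomial-growth ancient solution is identically zero,
i.e. `P_d = {0}`. -/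
theorem polynomial_growth_ancient_solutions_trivial
    (n : ℕ) (hn : 1 ≤ n) (lam V₀ : ℝ) (hlam : 0 < lam) (hV₀ : 0 < V₀) :
    ∃ ε₀ > (0 : ℝ), ∀ Lam : ℝ, lam < Lam →
    ∀ Ω₀ : Set (Fin n → ℝ), IsOpen Ω₀ → Ω₀.Nonempty →
      Bornology.IsBounded Ω₀ → volume Ω₀ = ENNReal.ofReal V₀ →
    ∀ a b c, GoodCoeffs Ω₀ lam Lam a b c → Smallness Ω₀ b c ε₀ →
    ∀ d : ℝ, 0 < d →
    ∀ u : ℝ → (Fin (n + 1) → ℝ) → ℝ, IsAncientSolution Ω₀ a b c u →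
    (∃ C > (0 : ℝ), ∀ t ≤ (0 : ℝ), ∀ x ∈ strip Ω₀,
        |u t x| ≤ C * (Real.sqrt (∑ i, x i ^ 2) + Real.sqrt |t| + 1) ^ d) →
    ∀ t ≤ (0 : ℝ), ∀ x ∈ strip Ω₀, u t x = 0 := by
  have hnR : (0 : ℝ) < n + 1 := by positivity
  -- `R` is the side of a cube of volume `2 V₀`, `P` comes from the Poincaré inequality
  set R : ℝ := (2 * V₀) ^ ((n : ℝ)⁻¹) with hRdef
  have hR : 0 < R := by positivity
  have hRn : R ^ n = 2 * V₀ := Real.rpow_inv_natCast_pow (by positivity) (by lia)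
  set P : ℝ := 2 * lam / (16 * R ^ 2 * (n + 1)) with hP
  have hPpos : 0 < P := by positivity
  have hDpos : 0 < 2 * (n + 1 : ℝ) / lam + 16 := by positivity
  refine ⟨P / 4 / (2 * (n + 1 : ℝ) / lam + 16), by positivity, ?_⟩
  set θ : ℝ := P / 4 / (2 * (n + 1 : ℝ) / lam + 16) with hθdef
  have hθ : 0 < θ := by positivity
  have hθP : 2 * θ * ((n + 1 : ℕ) : ℝ) / lam + 16 * θ ≤ P / 4 := by
    have h1 : θ * (2 * (n + 1 : ℝ) / lam + 16) = P / 4 := div_mul_cancel₀ _ hDpos.ne'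
    rw [← h1]; push_cast
    exact le_of_eq (by ring)
  intro Lam hLam Ω₀ hΩ _ hΩb hvol a b c hG hS d hd u hu ⟨C, hC, hgrow⟩ t ht x hx
  have hG' : GoodCoeffs Ω₀ lam Lam a b (fun x => c x + θ) := by
    refine ⟨hG.elliptic, hG.a_bdd, hG.a_reg, hG.b_bdd, ?_⟩
    obtain ⟨M, hM⟩ := hG.c_bdd
    refine ⟨M + |θ|, fun y hy => (abs_add_le _ _).trans ?_⟩
    linarith [hM y hy]
  have hb : ∀ y ∈ strip Ω₀, ∀ i, |b y i| ≤ Real.sqrt θ := fun y hy => (hS y hy).1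
  have hc : ∀ y ∈ strip Ω₀, c y + θ ≤ 2 * θ := fun y hy => by linarith [(hS y hy).2]
  have hU := hu.shift hΩ θ
  have hUgrow : ∀ k > 0, ∃ K, ∀ s ≤ (0 : ℝ), ∀ y ∈ strip Ω₀,
      |(strip Ω₀).indicator (fun x => Real.exp (θ * s) * u s x) y| ≤ K * Real.exp (k * |y 0|) := by
    intro k hk
    obtain ⟨K, hK⟩ := shifted_growth hΩb hθ hd hC hgrow hk
    refine ⟨K, fun s hs y hy => ?_⟩
    rw [indicator_of_mem hy]
    exact hK s hs y hy
  have hle := core hΩ hΩb hlam (hlam.trans hLam).le hθ.le hG' hb hc hV₀ hvol.le hR hRn hθP hU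
    hUgrow ht x
  have hge := core hΩ hΩb hlam (hlam.trans hLam).le hθ.le hG' hb hc hV₀ hvol.le hR hRn hθP hU.neg
    (fun k hk => by simpa only [abs_mul, abs_neg, abs_one, one_mul] using hUgrow k hk) ht x
  rw [indicator_of_mem hx] at hle hge
  have h0 : Real.exp (θ * t) * u t x = 0 := by linarith
  exact (mul_eq_zero.1 h0).resolve_left (Real.exp_pos _).ne'
end
end

section
/- Let f₁, …, f_k : [0,∞) → [0,∞) be k non-decreasing functions, none identically zero, and suppose that for some constants d, C > 0 one has fᵢ(r) ≤ C e^{d r} for all r ≥ 0 and all i = 1, …, k. Then for every δ > 0, every positive integer ℓ < k, and every σ > e^{(k/(k−ℓ+1)) δ d}, there exist ℓ indices α₁, …, α_ℓ ∈ {1, …, k} and infinitely many positive integers m such that f_{αᵢ}((m+1)δ) ≤ σ f_{αᵢ}(mδ) for all i = 1, …, ℓ. -/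
open Set

/-!
Call an index `i` good at `m` if `f i ((m+1)δ) ≤ σ * f i (mδ)`. If at least `ℓ` indices are good
for infinitely many `m`, then, as `Fin k` has finitely many subsets, a single set of `ℓ` indices is
good for infinitely many `m` (`exists_injective_infinite_of_card_le`). Otherwise, for all large `m`
at least `q = k - ℓ + 1` indices are bad, so the product `P m = ∏ i, f i (mδ)`, which is eventually
positive, grows by a factor at least `σ ^ q` at each step (`pow_mul_prod_le_prod`). But
`P m ≤ C ^ k * exp (k * d * δ) ^ m`, and `exp (k * δ * d) < σ ^ q` is exactly the hypothesis on `σ`,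
a contradiction.
-/

/-- Pigeonhole over the finitely many subsets of `Fin k`. -/
lemma exists_injective_infinite_of_card_le {k ℓ : ℕ} (good : ℕ → Finset (Fin k))
    (h : {m : ℕ | 0 < m ∧ ℓ ≤ (good m).card}.Infinite) :
    ∃ α : Fin ℓ → Fin k, Function.Injective α ∧ {m : ℕ | 0 < m ∧ ∀ i, α i ∈ good m}.Infinite := by
  by_contra! hcon
  refine h (Set.Finite.subset (Set.finite_iUnion
    (f := fun S : {S : Finset (Fin k) // S.card = ℓ} => {m : ℕ | 0 < m ∧ S.1 ⊆ good m}) ?_) ?_)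
  · rintro ⟨S, hS⟩
    have := hcon (S.orderEmbOfFin hS) (S.orderEmbOfFin hS).injective
    exact this.subset fun m hm => ⟨hm.1, fun i => hm.2 (S.orderEmbOfFin_mem hS i)⟩
  · rintro m ⟨hm, hc⟩
    obtain ⟨S, hS, hSc⟩ := Finset.exists_subset_card_eq hc
    exact Set.mem_iUnion.2 ⟨⟨S, hSc⟩, hm, hS⟩

/-- One step of growth: no factor decreases, and each factor not in `G` grows at least by `σ`. -/
lemma pow_mul_prod_le_prod {k q : ℕ} {σ : ℝ} (hσ : 1 ≤ σ) (a b : Fin k → ℝ)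
    (ha : ∀ i, 0 ≤ a i) (hab : ∀ i, a i ≤ b i) (G : Finset (Fin k))
    (hG : ∀ i ∉ G, σ * a i ≤ b i) (hq : q + G.card ≤ k) :
    σ ^ q * ∏ i, a i ≤ ∏ i, b i := by
  have hcard : q ≤ (Gᶜ).card := by
    rw [Finset.card_compl, Fintype.card_fin]; omega
  calc σ ^ q * ∏ i, a i ≤ σ ^ (Gᶜ).card * ∏ i, a i :=
        mul_le_mul_of_nonneg_right (pow_le_pow_right₀ hσ hcard)
          (Finset.prod_nonneg fun i _ => ha i)
    _ = ∏ i, (if i ∈ Gᶜ then σ else 1) * a i := by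
        rw [Finset.prod_mul_distrib, Finset.prod_ite_mem, Finset.univ_inter, Finset.prod_const]
    _ ≤ ∏ i, b i := by
        refine Finset.prod_le_prod (fun i _ => ?_) (fun i _ => ?_)
        · split_ifs
          · exact mul_nonneg (by linarith) (ha i)
          · simpa using ha i
        · split_ifs with hi
          · exact hG i (Finset.mem_compl.1 hi)
          · simpa using hab i

/-- Lemma 3.3 of the paper: given `k` non-decreasing nonnegative functions, none identically
zero, all bounded by `C e^{d r}`, for any `δ > 0`, `ℓ < k` and `σ > e^{(k/(k-ℓ+1)) δ d}` there
are `ℓ` of the functions and infinitely many integers `m` with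
`f_{αᵢ}((m+1)δ) ≤ σ f_{αᵢ}(m δ)` for all `i`. -/
theorem exp_growth_selection
    (k : ℕ) (f : Fin k → ℝ → ℝ)
    (hnonneg : ∀ i, ∀ r ≥ (0 : ℝ), 0 ≤ f i r)
    (hmono : ∀ i, ∀ s r : ℝ, 0 ≤ s → s ≤ r → f i s ≤ f i r)
    (hnz : ∀ i, ∃ r ≥ (0 : ℝ), 0 < f i r)
    (d C : ℝ) (hd : 0 < d) (hC : 0 < C)
    (hbd : ∀ i, ∀ r ≥ (0 : ℝ), f i r ≤ C * Real.exp (d * r))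
    (δ : ℝ) (hδ : 0 < δ) (ℓ : ℕ) (hℓpos : 0 < ℓ) (hℓk : ℓ < k)
    (σ : ℝ) (hσ : Real.exp ((k : ℝ) / ((k : ℝ) - (ℓ : ℝ) + 1) * δ * d) < σ) :
    ∃ α : Fin ℓ → Fin k, Function.Injective α ∧
      {m : ℕ | 0 < m ∧
        ∀ i, f (α i) (((m : ℝ) + 1) * δ) ≤ σ * f (α i) ((m : ℝ) * δ)}.Infinite := by
  classical
  set good : ℕ → Finset (Fin k) := fun m =>
    Finset.univ.filter fun i => f i (((m : ℝ) + 1) * δ) ≤ σ * f i ((m : ℝ) * δ) with hgood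
  by_cases hinf : {m : ℕ | 0 < m ∧ ℓ ≤ (good m).card}.Infinite
  · simpa [hgood] using exists_injective_infinite_of_card_le good hinf
  exfalso
  rw [Set.not_infinite] at hinf
  obtain ⟨M, hM⟩ := hinf.bddAbove
  choose r hr0 hr using hnz
  -- `∑ j, r j` bounds every `r i`, so all `f i` are positive beyond it.
  obtain ⟨R, hR⟩ := exists_nat_gt ((∑ j, r j) / δ)
  set N : ℕ := max (M + 1) R with hN
  have hNpos : 0 < N := by omega
  have hpos : ∀ i, 0 < f i ((N : ℝ) * δ) := by
    intro i
    refine (hr i).trans_le (hmono i _ _ (hr0 i) ?_)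
    have h1 : r i ≤ ∑ j, r j :=
      Finset.single_le_sum (f := r) (fun j _ => hr0 j) (Finset.mem_univ i)
    have h2 : (R : ℝ) ≤ N := by exact_mod_cast le_max_right _ _
    rw [div_lt_iff₀ hδ] at hR
    nlinarith
  set P : ℕ → ℝ := fun m => ∏ i, f i ((m : ℝ) * δ) with hP
  have hPN : 0 < P N := Finset.prod_pos fun i _ => hpos i
  obtain ⟨q, hq⟩ : ∃ q : ℕ, q + ℓ = k + 1 := ⟨k + 1 - ℓ, by omega⟩
  have hqr : (k : ℝ) - ℓ + 1 = q := by
    have : (q : ℝ) + ℓ = k + 1 := by exact_mod_cast hq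
    linarith
  have hq0 : (0 : ℝ) < q := by exact_mod_cast (by omega : 0 < q)
  rw [hqr] at hσ
  have hσ1 : 1 ≤ σ := le_trans (Real.one_le_exp (by positivity)) hσ.le
  have hE : Real.exp (k * δ * d) < σ ^ q := by
    have h := pow_lt_pow_left₀ hσ (Real.exp_pos _).le (by omega : q ≠ 0)
    have he : (q : ℝ) * ((k : ℝ) / q * δ * d) = k * δ * d := by field_simp
    rwa [← Real.exp_nat_mul, he] at h
  have hstep : ∀ m, N ≤ m → σ ^ q * P m ≤ P (m + 1) := by
    intro m hm
    have hm0 : (0 : ℝ) ≤ m * δ := by positivity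
    refine pow_mul_prod_le_prod hσ1 _ _ (fun i => hnonneg i _ hm0)
      (fun i => hmono i _ _ hm0 ?_) (good m) ?_ ?_
    · push_cast
      nlinarith
    · intro i hi
      simp only [hgood, Finset.mem_filter, Finset.mem_univ, true_and, not_le] at hi
      push_cast
      exact hi.le
    · have : (good m).card < ℓ := by
        by_contra! hc
        have := hM (show m ∈ {m : ℕ | 0 < m ∧ ℓ ≤ (good m).card} from ⟨by omega, hc⟩)
        omega
      omega
  have hlow : ∀ n, (σ ^ q) ^ n * P N ≤ P (N + n) := by
    intro n
    induction n with
    | zero => simp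
    | succ n ih =>
      calc (σ ^ q) ^ (n + 1) * P N = σ ^ q * ((σ ^ q) ^ n * P N) := by ring
        _ ≤ σ ^ q * P (N + n) := by gcongr
        _ ≤ P (N + n + 1) := hstep _ (by omega)
  have hup : ∀ m, P m ≤ C ^ k * Real.exp (k * δ * d) ^ m := by
    intro m
    have hm0 : (0 : ℝ) ≤ m * δ := by positivity
    calc P m ≤ ∏ _i : Fin k, C * Real.exp (d * (m * δ)) :=
          Finset.prod_le_prod (fun i _ => hnonneg i _ hm0) (fun i _ => hbd i _ hm0)
      _ = C ^ k * Real.exp (k * δ * d) ^ m := by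
          rw [Finset.prod_const, Finset.card_univ, Fintype.card_fin, mul_pow,
            ← Real.exp_nat_mul, ← Real.exp_nat_mul]
          congr 2
          ring
  set E := Real.exp (k * δ * d) with hEdef
  have hE0 : 0 < E := Real.exp_pos _
  obtain ⟨n, hn⟩ := pow_unbounded_of_one_lt (C ^ k * E ^ N / P N) ((one_lt_div hE0).2 hE)
  rw [div_pow, div_lt_div_iff₀ hPN (by positivity)] at hn
  have h := (hlow n).trans (hup (N + n))
  rw [pow_add, ← mul_assoc] at h
  linarith
end

section
/- Let f : [0,∞) → [0,∞) be non-decreasing and not identically zero, and suppose f(r) ≤ C e^{a r} for all r ≥ 0, for some constants C, a > 0. Then for every δ > 0 and every σ > e^{a δ}, there exist infinitely many positive integers m such that f((m+1)δ) ≤ σ f(mδ). -/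
/-!
If only finitely many `m` were good, then from some `M` on every step would multiply `f` by more
than `σ`, so `f ((M + k) δ) ≥ σ ^ k * f (M δ)` with `f (M δ) > 0` once `M` is large. The
hypothesis bounds the left side by `C e^{a M δ} (e^{a δ}) ^ k`, which is impossible for large `k`
because `σ / e^{a δ} > 1`.
-/

open Set

/-- A non-decreasing, not identically zero function `f : [0,∞) → [0,∞)` with
`f(r) ≤ C e^{a r}` satisfies `f((m+1)δ) ≤ σ f(mδ)` for infinitely many positive integers `m`,
whenever `δ > 0` and `σ > e^{a δ}`. -/
theorem exp_growth_doubling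
    (f : ℝ → ℝ)
    (hnonneg : ∀ r ≥ (0 : ℝ), 0 ≤ f r)
    (hmono : ∀ s r : ℝ, 0 ≤ s → s ≤ r → f s ≤ f r)
    (hnz : ∃ r ≥ (0 : ℝ), 0 < f r)
    (C a : ℝ) (hC : 0 < C) (ha : 0 < a)
    (hbd : ∀ r ≥ (0 : ℝ), f r ≤ C * Real.exp (a * r))
    (δ σ : ℝ) (hδ : 0 < δ) (hσ : Real.exp (a * δ) < σ) :
    {m : ℕ | 0 < m ∧ f (((m : ℝ) + 1) * δ) ≤ σ * f ((m : ℝ) * δ)}.Infinite := by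
  intro hfin
  obtain ⟨N, hN⟩ := hfin.bddAbove
  obtain ⟨r, hr0, hr⟩ := hnz
  obtain ⟨n, hn⟩ := exists_nat_ge (r / δ)
  rw [div_le_iff₀ hδ] at hn
  -- `M` lies beyond every good index and satisfies `M δ ≥ r`, so `f (M δ) > 0`.
  obtain ⟨M, hMN, hMn⟩ : ∃ M : ℕ, N < M ∧ n ≤ M := ⟨N + 1 + n, by omega, by omega⟩
  have hpos : 0 < f (M * δ) := by
    refine hr.trans_le (hmono _ _ hr0 (hn.trans ?_))
    gcongr
  have hσ0 : 0 < σ := (Real.exp_pos _).trans hσ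
  have hgrow : ∀ k : ℕ, σ ^ k * f (M * δ) ≤ f (((M + k : ℕ) : ℝ) * δ) := by
    intro k
    induction k with
    | zero => simp
    | succ k ih =>
      have hbad : σ * f (((M + k : ℕ) : ℝ) * δ) < f ((((M + k : ℕ) : ℝ) + 1) * δ) := by
        by_contra! hcon
        have hle : M + k ≤ N := hN ⟨by omega, hcon⟩
        omega
      calc σ ^ (k + 1) * f (M * δ) = σ * (σ ^ k * f (M * δ)) := by ring
        _ ≤ σ * f (((M + k : ℕ) : ℝ) * δ) := by gcongr
        _ ≤ f ((((M + k : ℕ) : ℝ) + 1) * δ) := hbad.le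
        _ = f (((M + (k + 1) : ℕ) : ℝ) * δ) := by push_cast; ring_nf
  obtain ⟨k, hk⟩ := pow_unbounded_of_one_lt (C * Real.exp (a * (M * δ)) / f (M * δ))
    ((one_lt_div (Real.exp_pos (a * δ))).2 hσ)
  rw [div_pow, div_lt_div_iff₀ hpos (by positivity)] at hk
  have hupper := hbd (((M + k : ℕ) : ℝ) * δ) (by positivity)
  have hexp : Real.exp (a * (((M + k : ℕ) : ℝ) * δ))
      = Real.exp (a * (M * δ)) * Real.exp (a * δ) ^ k := by
    rw [← Real.exp_nat_mul, ← Real.exp_add]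
    push_cast
    ring_nf
  rw [hexp, ← mul_assoc] at hupper
  linarith [hgrow k]
end
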